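/- arXiv:1208.4584 — 2 statements merged into one kernel-verified Lean document; each statement's English description precedes it below -/
import Mathlib

section
/- Assume dim Γ_∞(f) = n, let γ be a face of Γ_∞(f) with 0 ∈ γ, let ℝ^S be the minimal coordinate subspace of ℝ^n containing γ, and assume dim γ < |S|. Then γ is an atypical face of Γ_∞(f). -/
open scoped Classical

noncomputable section

/-- Dot product on `ℝⁿ`. -/
def dotR {n : ℕ} (u v : Fin n → ℝ) : ℝ := ∑ i, u i * v i

/-- The image in `ℝⁿ` of the support of a polynomial. -/
def realSupp {n : ℕ} (f : MvPolynomial (Fin n) ℂ) : Set (Fin n → ℝ) :=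
  (fun v : Fin n →₀ ℕ => fun i => (v i : ℝ)) '' {v | MvPolynomial.coeff v f ≠ 0}

/-- The Newton polyhedron at infinity `Γ_∞(f)`. -/
def NPinf {n : ℕ} (f : MvPolynomial (Fin n) ℂ) : Set (Fin n → ℝ) :=
  convexHull ℝ ({0} ∪ realSupp f)

/-- The supporting face `γ_u` of `u` in `Γ_∞(f)`. -/
def suppFace {n : ℕ} (f : MvPolynomial (Fin n) ℂ) (u : Fin n → ℝ) : Set (Fin n → ℝ) :=
  {v ∈ NPinf f | ∀ w ∈ NPinf f, dotR u v ≤ dotR u w}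

/-- A face of `Γ_∞(f)` is any set of the form `γ_u`. -/
def IsFaceOf {n : ℕ} (f : MvPolynomial (Fin n) ℂ) (γ : Set (Fin n → ℝ)) : Prop :=
  ∃ u : Fin n → ℝ, γ = suppFace f u

/-- Dimension of a subset of `ℝⁿ`: the dimension of its affine span. -/
def setDim {n : ℕ} (s : Set (Fin n → ℝ)) : ℕ :=
  Module.finrank ℝ (affineSpan ℝ s).direction

/-- A face `γ` of `Γ_∞(f)` with `0 ∈ γ` is atypical if some facet of `Γ_∞(f)`
containing `γ` has all its nonzero inner conormal vectors outside `ℝ_{≥0}ⁿ`. -/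
def IsAtypicalFace {n : ℕ} (f : MvPolynomial (Fin n) ℂ) (γ : Set (Fin n → ℝ)) : Prop :=
  IsFaceOf f γ ∧ (0 : Fin n → ℝ) ∈ γ ∧
    ∃ Γf : Set (Fin n → ℝ), IsFaceOf f Γf ∧ setDim Γf = n - 1 ∧ γ ⊆ Γf ∧
      ∀ u : Fin n → ℝ, u ≠ 0 → suppFace f u = Γf → ¬ (∀ i, 0 ≤ u i)

/-- The cone `σ(γ)` of the dual fan of `Γ_∞(f)` corresponding to the face `γ`. -/
def sigmaCone {n : ℕ} (f : MvPolynomial (Fin n) ℂ) (γ : Set (Fin n → ℝ)) : Set (Fin n → ℝ) :=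
  closure {u : Fin n → ℝ | suppFace f u = γ}

/-- The coordinate subspace `ℝ^S` of `ℝⁿ`. -/
def coordSub {n : ℕ} (S : Finset (Fin n)) : Set (Fin n → ℝ) :=
  {v | ∀ i ∉ S, v i = 0}

/-- The `γ`-part `f_γ` of `f`. -/
def facePart {n : ℕ} (f : MvPolynomial (Fin n) ℂ) (γ : Set (Fin n → ℝ)) :
    MvPolynomial (Fin n) ℂ :=
  ∑ v ∈ f.support,
    if (fun i => (v i : ℝ)) ∈ γ then MvPolynomial.monomial v (MvPolynomial.coeff v f) else 0

/-- `f` is non-degenerate at infinity. -/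
def NondegAtInfty {n : ℕ} (f : MvPolynomial (Fin n) ℂ) : Prop :=
  ∀ γ : Set (Fin n → ℝ), IsFaceOf f γ → (0 : Fin n → ℝ) ∉ γ →
    ∀ x : Fin n → ℂ, (∀ i, x i ≠ 0) → MvPolynomial.eval x (facePart f γ) = 0 →
      ∃ i, MvPolynomial.eval x (MvPolynomial.pderiv i (facePart f γ)) ≠ 0

/-- `Δ_γ`: the convex hull of `{0} ∪ γ`. -/
def DeltaG {n : ℕ} (γ : Set (Fin n → ℝ)) : Set (Fin n → ℝ) :=
  convexHull ℝ ({0} ∪ γ)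

/-- The lattice `M_γ = ℤⁿ ∩ L(Δ_γ)`. -/
def Mgamma {n : ℕ} (γ : Set (Fin n → ℝ)) : AddSubgroup (Fin n → ℤ) where
  carrier := {v | (fun i => (v i : ℝ)) ∈ Submodule.span ℝ (DeltaG γ)}
  add_mem' := by
    intro a b ha hb
    have h : (fun i => (((a + b) : Fin n → ℤ) i : ℝ))
        = (fun i => (a i : ℝ)) + fun i => (b i : ℝ) := by
      funext i; push_cast [Pi.add_apply]; ring
    simp only [Set.mem_setOf_eq, h]
    exact Submodule.add_mem _ ha hb
  zero_mem' := by
    have h : (fun i => (((0 : Fin n → ℤ)) i : ℝ)) = (0 : Fin n → ℝ) := by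
      funext i; simp
    simp only [Set.mem_setOf_eq, h]
    exact Submodule.zero_mem _
  neg_mem' := by
    intro a ha
    have h : (fun i => (((-a) : Fin n → ℤ) i : ℝ)) = -(fun i => (a i : ℝ)) := by
      funext i; push_cast [Pi.neg_apply]; ring
    simp only [Set.mem_setOf_eq, h]
    exact Submodule.neg_mem _ ha

/-!
Faces of `Γ_∞(f)` through `0` are cut out by the linear functionals that are nonnegative on the
support `A` of `f`, so their facets are governed by the fundamental theorem of linear inequalities:
a functional that is nonnegative on a spanning finite set `A` and negative at `x` can be tilted,
keeping the vectors of `A` on which it vanishes, until the vectors of `A` in its kernel span the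
kernel.

Let `γ = γ_u`. Some basis vector `e_i` with `u i ≤ 0` lies outside the span of `γ`: as
`dim γ < |S|`, there is an `i ∈ S` with `e_i` outside the span, and if `0 < u i`, then a point of
`γ` with positive `i`-th coordinate, on which `u` vanishes, forces some `u j < 0`, so that `e_j`
lies outside the span as well. If `u i = 0`, adding to a large multiple of `u` a functional that
vanishes on `γ` and is negative at `e_i` makes the `i`-th coordinate negative. Tilting then yields a
facet containing `γ` with an inner conormal vector `w` such that `w i < 0`. All nonzero inner
conormal vectors of this facet are positive multiples of `w`.
-/

section LinearInequalities

variable {K E : Type*} [Field K] [LinearOrder K] [IsStrictOrderedRing K] [AddCommGroup E]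
  [Module K E] {A : Set E} {φ ψ : Module.Dual K E} {x : E}

theorem exists_le_ker_apply_neg_of_notMem {W : Submodule K E} (hx : x ∉ W) :
    ∃ ψ : Module.Dual K E, W ≤ LinearMap.ker ψ ∧ ψ x < 0 := by
  obtain ⟨ψ, hψx, hψ⟩ := Submodule.exists_le_ker_of_notMem hx
  rcases lt_or_gt_of_ne hψx with hneg | hpos
  · exact ⟨ψ, hψ, hneg⟩
  · exact ⟨-ψ, fun v hv => by simpa using hψ hv, by simpa using hpos⟩

theorem exists_nonneg_smul_add (hA : A.Finite) (hφ : ∀ a ∈ A, 0 ≤ φ a)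
    (hψ : ∀ a ∈ A, φ a = 0 → ψ a = 0) : ∃ c : K, ∀ a ∈ A, 0 ≤ (c • φ + ψ) a := by
  obtain ⟨c, hc⟩ := (hA.image fun a => -ψ a / φ a).bddAbove
  refine ⟨c, fun a ha => ?_⟩
  rw [LinearMap.add_apply, LinearMap.smul_apply, smul_eq_mul]
  rcases (hφ a ha).eq_or_lt with hzero | hpos
  · simp [← hzero, hψ a ha hzero.symm]
  · have hle : -ψ a / φ a ≤ c := hc (Set.mem_image_of_mem _ ha)
    linarith [(div_le_iff₀ hpos).mp hle]

theorem exists_nonneg_apply_neg_of_notMem_span (hA : A.Finite) (hφ : ∀ a ∈ A, 0 ≤ φ a)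
    (hφx : φ x ≤ 0) (hx : x ∉ Submodule.span K {a ∈ A | φ a = 0}) :
    ∃ ψ : Module.Dual K E,
      (∀ a ∈ A, 0 ≤ ψ a) ∧ (∀ a ∈ A, φ a = 0 → ψ a = 0) ∧ ψ x < 0 := by
  rcases hφx.lt_or_eq with hneg | hzero
  · exact ⟨φ, hφ, fun _ _ h => h, hneg⟩
  · obtain ⟨w, hw, hwx⟩ := exists_le_ker_apply_neg_of_notMem hx
    have hwA : ∀ a ∈ A, φ a = 0 → w a = 0 := fun a ha h => hw (Submodule.subset_span ⟨ha, h⟩)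
    obtain ⟨c, hc⟩ := exists_nonneg_smul_add hA hφ hwA
    exact ⟨c • φ + w, hc, fun a ha h => by simp [h, hwA a ha h], by simpa [hzero] using hwx⟩

/-- The ratio test of the simplex method. -/
theorem exists_nonneg_add_smul_apply_eq_zero (hA : A.Finite) (hφ : ∀ a ∈ A, 0 ≤ φ a)
    (hψ : ∃ a ∈ A, ψ a < 0) :
    ∃ t : K, (∀ a ∈ A, 0 ≤ (φ + t • ψ) a) ∧ ∃ b ∈ A, ψ b < 0 ∧ (φ + t • ψ) b = 0 := by
  obtain ⟨b, ⟨hbA, hb⟩, hmin⟩ := Set.exists_min_image {a ∈ A | ψ a < 0} (fun a => φ a / -ψ a)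
    (hA.sep _) hψ
  have ht : 0 ≤ φ b / -ψ b := div_nonneg (hφ b hbA) (neg_pos.mpr hb).le
  refine ⟨φ b / -ψ b, fun a ha => ?_, b, hbA, hb, ?_⟩
  · rw [LinearMap.add_apply, LinearMap.smul_apply, smul_eq_mul]
    rcases lt_or_ge (ψ a) 0 with hneg | hnonneg
    · have := (le_div_iff₀ (neg_pos.mpr hneg)).mp (hmin a ⟨ha, hneg⟩)
      linarith
    · exact add_nonneg (hφ a ha) (mul_nonneg ht hnonneg)
  · rw [LinearMap.add_apply, LinearMap.smul_apply, smul_eq_mul]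
    field_simp [hb.ne]
    ring

theorem exists_smul_apply_neg_of_span_eq_top (hspan : Submodule.span K A = ⊤)
    (hψ : ψ ≠ 0) : ∃ ε : K, ∃ a ∈ A, (ε • ψ) a < 0 := by
  obtain ⟨a, ha, hψa⟩ : ∃ a ∈ A, ψ a ≠ 0 := by
    by_contra! hzero
    exact hψ (LinearMap.ext_on hspan fun a ha => by simpa using hzero a ha)
  exact ⟨-ψ a, a, ha, by simpa using mul_self_pos.mpr hψa⟩

/-- The fundamental theorem of linear inequalities, relative to a face of the cone spanned
by `A`. -/
theorem exists_nonneg_span_eq_ker (hA : A.Finite) (hspan : Submodule.span K A = ⊤)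
    (hφ : ∀ a ∈ A, 0 ≤ φ a) (hφx : φ x < 0) :
    ∃ ψ : Module.Dual K E, (∀ a ∈ A, 0 ≤ ψ a) ∧ (∀ a ∈ A, φ a = 0 → ψ a = 0) ∧ ψ x < 0 ∧
      Submodule.span K {a ∈ A | ψ a = 0} = LinearMap.ker ψ := by
  let zeros (ψ : Module.Dual K E) : Set E := {a ∈ A | ψ a = 0}
  obtain ⟨ψ, ⟨hψ, hφψ, hψx⟩, hmax⟩ := Set.Finite.exists_maximalFor' zeros
    {ψ | (∀ a ∈ A, 0 ≤ ψ a) ∧ (∀ a ∈ A, φ a = 0 → ψ a = 0) ∧ ψ x < 0}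
    (hA.finite_subsets.subset (Set.image_subset_iff.mpr fun _ _ => Set.sep_subset _ _))
    ⟨φ, hφ, fun _ _ h => h, hφx⟩
  refine ⟨ψ, hψ, hφψ, hψx, le_antisymm (Submodule.span_le.mpr fun a ha => ha.2) ?_⟩
  intro y hy
  by_contra hyspan
  obtain ⟨w, hw, hwy⟩ := exists_le_ker_apply_neg_of_notMem hyspan
  -- Subtracting a multiple of `ψ` makes `w` vanish at `x` too, so that tilting keeps `ψ x`.
  let w' := w - (w x / ψ x) • ψ
  have hw'x : w' x = 0 := by simp [w', hψx.ne]
  have hw'A : ∀ a ∈ A, ψ a = 0 → w' a = 0 := fun a ha h => by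
    have hwa : w a = 0 := hw (Submodule.subset_span ⟨ha, h⟩)
    simp [w', h, hwa]
  have hw' : w' ≠ 0 := fun h => by
    have hw'y : w' y = w y := by simp [w', LinearMap.mem_ker.mp hy]
    rw [h, LinearMap.zero_apply] at hw'y
    exact hwy.ne hw'y.symm
  obtain ⟨ε, hε⟩ := exists_smul_apply_neg_of_span_eq_top hspan hw'
  obtain ⟨t, ht, b, hbA, hb, htb⟩ := exists_nonneg_add_smul_apply_eq_zero hA hψ hε
  have hkeep : ∀ a ∈ A, ψ a = 0 → (ψ + t • ε • w') a = 0 := fun a ha h => by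
    simp [h, hw'A a ha h]
  have hb' : b ∈ zeros ψ := hmax (j := ψ + t • ε • w')
    ⟨ht, fun a ha h => hkeep a ha (hφψ a ha h), by simpa [hw'x] using hψx⟩
    (fun a ha => ⟨ha.1, hkeep a ha.1 ha.2⟩) ⟨hbA, htb⟩
  exact hb.ne (by simp [hw'A b hbA hb'.2])

theorem apply_nonneg_of_mem_convexHull (hφ : ∀ a ∈ A, 0 ≤ φ a) (hx : x ∈ convexHull K A) :
    0 ≤ φ x :=
  convexHull_min hφ (convex_halfSpace_ge φ.isLinear 0) hx

theorem mem_span_of_mem_convexHull_of_apply_eq_zero (hA : A.Finite) (hφ : ∀ a ∈ A, 0 ≤ φ a)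
    (hx : x ∈ convexHull K A) (hφx : φ x = 0) : x ∈ Submodule.span K {a ∈ A | φ a = 0} := by
  by_contra hspan
  obtain ⟨ψ, hψ, -, hψx⟩ := exists_nonneg_apply_neg_of_notMem_span hA hφ hφx.le hspan
  exact hψx.not_ge (apply_nonneg_of_mem_convexHull hψ hx)

end LinearInequalities

theorem apply_mul_apply_comm_of_ker_le_ker {R M : Type*} [CommRing R] [AddCommGroup M] [Module R M]
    {φ ψ : Module.Dual R M} (hker : LinearMap.ker φ ≤ LinearMap.ker ψ) (x y : M) :
    φ x * ψ y = φ y * ψ x := by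
  have hmem : φ x • y - φ y • x ∈ LinearMap.ker φ := by simp [mul_comm]
  simpa [sub_eq_zero] using hker hmem

theorem exists_notMem_of_finrank_lt_card {R M ι : Type*} [Semiring R] [StrongRankCondition R]
    [AddCommMonoid M] [Module R M] {v : ι → M} (hv : LinearIndependent R v) {W : Submodule R M}
    [Module.Finite R W] {S : Finset ι} (hS : Module.finrank R W < S.card) :
    ∃ i ∈ S, v i ∉ W := by
  by_contra! hW
  have hli : LinearIndependent R fun i : S => (⟨v i, hW i i.2⟩ : W) :=
    LinearIndependent.of_comp W.subtype (hv.comp _ Subtype.val_injective)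
  have hle := hli.fintype_card_le_finrank
  rw [Fintype.card_coe] at hle
  exact hS.not_ge hle

section NewtonPolyhedron

variable {n : ℕ} {f : MvPolynomial (Fin n) ℂ} {u w v x : Fin n → ℝ}

theorem dotR_zero (u : Fin n → ℝ) : dotR u 0 = 0 :=
  dotProduct_zero u

theorem dotR_single_one (u : Fin n → ℝ) (i : Fin n) : dotR u (Pi.single i 1) = u i :=
  dotProduct_single_one u i

theorem setDim_eq_finrank_span {s : Set (Fin n → ℝ)} (h0 : 0 ∈ s) :
    setDim s = Module.finrank ℝ (Submodule.span ℝ s) := by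
  have hsub : (· -ᵥ (0 : Fin n → ℝ)) '' s = s := by simp
  rw [setDim, direction_affineSpan, vectorSpan_eq_span_vsub_set_right ℝ h0, hsub]

theorem finite_realSupp (f : MvPolynomial (Fin n) ℂ) : (realSupp f).Finite :=
  (f.support.finite_toSet.subset fun _ => MvPolynomial.mem_support_iff.mpr).image _

theorem finite_zero_union_realSupp (f : MvPolynomial (Fin n) ℂ) : ({0} ∪ realSupp f).Finite :=
  (Set.finite_singleton 0).union (finite_realSupp f)

theorem subset_NPinf (f : MvPolynomial (Fin n) ℂ) : {0} ∪ realSupp f ⊆ NPinf f :=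
  subset_convexHull ℝ _

theorem zero_mem_NPinf (f : MvPolynomial (Fin n) ℂ) : 0 ∈ NPinf f :=
  subset_NPinf f (Or.inl rfl)

theorem nonneg_of_mem_NPinf (hv : v ∈ NPinf f) : 0 ≤ v := by
  refine convexHull_min ?_ (convex_Ici (𝕜 := ℝ) 0) hv
  rintro _ (rfl | ⟨m, -, rfl⟩)
  · exact Set.self_mem_Ici
  · exact fun i => Nat.cast_nonneg (m i)

theorem span_zero_union_realSupp_eq_top (hdim : setDim (NPinf f) = n) :
    Submodule.span ℝ ({0} ∪ realSupp f) = ⊤ := by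
  have hle : Submodule.span ℝ (NPinf f) ≤ Submodule.span ℝ ({0} ∪ realSupp f) :=
    Submodule.span_le.mpr (convexHull_min Submodule.subset_span (Submodule.convex _))
  rw [setDim_eq_finrank_span (zero_mem_NPinf f)] at hdim
  have htop : Submodule.span ℝ (NPinf f) = ⊤ :=
    Submodule.eq_top_of_finrank_eq (by rw [hdim, Module.finrank_fin_fun])
  exact top_le_iff.mp (htop ▸ hle)

theorem zero_mem_suppFace_iff :
    0 ∈ suppFace f u ↔ ∀ a ∈ {0} ∪ realSupp f, 0 ≤ dotR u a := by
  constructor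
  · intro h0 a ha
    simpa only [dotR_zero] using h0.2 a (subset_NPinf f ha)
  · refine fun hu => ⟨zero_mem_NPinf f, fun v hv => ?_⟩
    rw [dotR_zero]
    exact apply_nonneg_of_mem_convexHull (φ := dotProductEquiv ℝ (Fin n) u) hu hv

theorem mem_suppFace_iff (h0 : 0 ∈ suppFace f u) :
    v ∈ suppFace f u ↔ v ∈ NPinf f ∧ dotR u v = 0 := by
  have hmin : ∀ y ∈ NPinf f, 0 ≤ dotR u y := by simpa only [dotR_zero] using h0.2
  constructor
  · intro hv
    exact ⟨hv.1, le_antisymm (dotR_zero u ▸ hv.2 0 h0.1) (hmin v hv.1)⟩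
  · rintro ⟨hv, huv⟩
    exact ⟨hv, huv ▸ hmin⟩

theorem span_suppFace_le_ker (h0 : 0 ∈ suppFace f u) :
    Submodule.span ℝ (suppFace f u) ≤ LinearMap.ker (dotProductEquiv ℝ (Fin n) u) :=
  Submodule.span_le.mpr fun _ hv => ((mem_suppFace_iff h0).mp hv).2

theorem span_suppFace (h0 : 0 ∈ suppFace f u) :
    Submodule.span ℝ (suppFace f u) =
      Submodule.span ℝ {a ∈ {0} ∪ realSupp f | dotProductEquiv ℝ (Fin n) u a = 0} := by
  apply le_antisymm
  · refine Submodule.span_le.mpr fun v hv => ?_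
    obtain ⟨hvf, huv⟩ := (mem_suppFace_iff h0).mp hv
    exact mem_span_of_mem_convexHull_of_apply_eq_zero (finite_zero_union_realSupp f)
      (zero_mem_suppFace_iff.mp h0) hvf huv
  · exact Submodule.span_mono fun a ha => (mem_suppFace_iff h0).mpr ⟨subset_NPinf f ha.1, ha.2⟩

theorem suppFace_subset_suppFace (hu : 0 ∈ suppFace f u) (hw : 0 ∈ suppFace f w)
    (huw : ∀ a ∈ {0} ∪ realSupp f, dotR u a = 0 → dotR w a = 0) :
    suppFace f u ⊆ suppFace f w := by
  intro v hv
  have hspan : Submodule.span ℝ (suppFace f u) ≤ LinearMap.ker (dotProductEquiv ℝ (Fin n) w) := by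
    rw [span_suppFace hu]
    exact Submodule.span_le.mpr fun a ha => huw a ha.1 ha.2
  exact (mem_suppFace_iff hw).mpr ⟨hv.1, hspan (Submodule.subset_span hv)⟩

theorem exists_suppFace_superset_span_eq_ker (hdim : setDim (NPinf f) = n)
    (h0 : 0 ∈ suppFace f u) (hux : dotR u x ≤ 0) (hx : x ∉ Submodule.span ℝ (suppFace f u)) :
    ∃ w, suppFace f u ⊆ suppFace f w ∧ dotR w x < 0 ∧
      Submodule.span ℝ (suppFace f w) = LinearMap.ker (dotProductEquiv ℝ (Fin n) w) := by
  have hfin := finite_zero_union_realSupp f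
  rw [span_suppFace h0] at hx
  obtain ⟨φ, hφ, huφ, hφx⟩ :=
    exists_nonneg_apply_neg_of_notMem_span hfin (zero_mem_suppFace_iff.mp h0) hux hx
  obtain ⟨ψ, hψ, hφψ, hψx, hker⟩ :=
    exists_nonneg_span_eq_ker hfin (span_zero_union_realSupp_eq_top hdim) hφ hφx
  obtain ⟨w, rfl⟩ := (dotProductEquiv ℝ (Fin n)).surjective ψ
  have hw0 : 0 ∈ suppFace f w := zero_mem_suppFace_iff.mpr hψ
  exact ⟨w, suppFace_subset_suppFace h0 hw0 fun a ha hua => hφψ a ha (huφ a ha hua), hψx,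
    (span_suppFace hw0).trans hker⟩

theorem setDim_suppFace_of_span_eq_ker (h0 : 0 ∈ suppFace f w) (hw : w ≠ 0)
    (hspan : Submodule.span ℝ (suppFace f w) = LinearMap.ker (dotProductEquiv ℝ (Fin n) w)) :
    setDim (suppFace f w) = n - 1 := by
  have hker := Module.Dual.finrank_ker_add_one_of_ne_zero
    ((dotProductEquiv ℝ (Fin n)).map_ne_zero_iff.mpr hw)
  rw [Module.finrank_fin_fun] at hker
  rw [setDim_eq_finrank_span h0, hspan]
  exact Nat.eq_sub_of_add_eq hker

theorem eq_zero_of_suppFace_eq (hdim : setDim (NPinf f) = n) (h0 : 0 ∈ suppFace f w)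
    (hspan : Submodule.span ℝ (suppFace f w) = LinearMap.ker (dotProductEquiv ℝ (Fin n) w))
    (hwx : dotR w x < 0) (hu : suppFace f u = suppFace f w) (hux : 0 ≤ dotR u x) : u = 0 := by
  have hu0 : 0 ∈ suppFace f u := hu ▸ h0
  have hker : LinearMap.ker (dotProductEquiv ℝ (Fin n) w) ≤
      LinearMap.ker (dotProductEquiv ℝ (Fin n) u) :=
    hspan ▸ hu ▸ span_suppFace_le_ker hu0
  refine (dotProductEquiv ℝ (Fin n)).map_eq_zero_iff.mp
    (LinearMap.ext_on (span_zero_union_realSupp_eq_top hdim) fun a ha => ?_)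
  have hwa : 0 ≤ dotR w a := zero_mem_suppFace_iff.mp h0 a ha
  have hua : 0 ≤ dotR u a := zero_mem_suppFace_iff.mp hu0 a ha
  have hcomm : dotR w x * dotR u a = dotR w a * dotR u x :=
    apply_mul_apply_comm_of_ker_le_ker hker x a
  have hprod : 0 ≤ dotR w x * dotR u a := hcomm ▸ mul_nonneg hwa hux
  exact le_antisymm (nonpos_of_mul_nonneg_right hprod hwx) hua

theorem exists_apply_ne_zero_of_forall_coordSub_subset {γ : Set (Fin n → ℝ)} {S : Finset (Fin n)}
    (hmin : ∀ S' : Finset (Fin n), γ ⊆ coordSub S' → S ⊆ S') {i : Fin n} (hi : i ∈ S) :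
    ∃ v ∈ γ, v i ≠ 0 := by
  by_contra! hzero
  have hsub : γ ⊆ coordSub (Finset.univ.erase i) := fun v hv j hj => by
    obtain rfl : j = i := by simpa using hj
    exact hzero v hv
  exact Finset.notMem_erase i _ (hmin _ hsub hi)

theorem exists_apply_neg_of_dotR_eq_zero (hv : 0 ≤ v) (huv : dotR u v = 0) {i : Fin n}
    (hvi : v i ≠ 0) (hui : 0 < u i) : ∃ j, u j < 0 := by
  by_contra! hu
  have hzero := (Finset.sum_eq_zero_iff_of_nonneg fun j _ => mul_nonneg (hu j) (hv j)).mp huv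
  exact mul_ne_zero hui.ne' hvi (hzero i (Finset.mem_univ i))

theorem exists_apply_nonpos_single_notMem_span (h0 : 0 ∈ suppFace f u) {S : Finset (Fin n)}
    (hmin : ∀ S' : Finset (Fin n), suppFace f u ⊆ coordSub S' → S ⊆ S')
    (hlt : setDim (suppFace f u) < S.card) :
    ∃ i, u i ≤ 0 ∧ Pi.single i 1 ∉ Submodule.span ℝ (suppFace f u) := by
  rw [setDim_eq_finrank_span h0] at hlt
  obtain ⟨i, hiS, hi⟩ := exists_notMem_of_finrank_lt_card (Pi.linearIndependent_single_one _ ℝ) hlt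
  rcases le_or_gt (u i) 0 with hnonpos | hpos
  · exact ⟨i, hnonpos, hi⟩
  obtain ⟨v, hv, hvi⟩ := exists_apply_ne_zero_of_forall_coordSub_subset hmin hiS
  have huv : dotR u v = 0 := ((mem_suppFace_iff h0).mp hv).2
  obtain ⟨j, hj⟩ := exists_apply_neg_of_dotR_eq_zero (nonneg_of_mem_NPinf hv.1) huv hvi hpos
  refine ⟨j, hj.le, fun hspan => ?_⟩
  exact hj.ne ((dotR_single_one u j).symm.trans (span_suppFace_le_ker h0 hspan))

end NewtonPolyhedron

/-- If `γ` is a face of `Γ_∞(f)` with `0 ∈ γ`, `ℝ^S` is the minimal coordinate subspace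
containing `γ`, and `dim γ < |S|`, then `γ` is an atypical face of `Γ_∞(f)`. -/
theorem atypical_of_dim_lt_card {n : ℕ} (f : MvPolynomial (Fin n) ℂ)
    (hdim : setDim (NPinf f) = n) (γ : Set (Fin n → ℝ))
    (hγ : IsFaceOf f γ) (h0 : (0 : Fin n → ℝ) ∈ γ)
    (S : Finset (Fin n)) (hS : γ ⊆ coordSub S)
    (hmin : ∀ S' : Finset (Fin n), γ ⊆ coordSub S' → S ⊆ S')
    (hlt : setDim γ < S.card) :
    IsAtypicalFace f γ := by
  obtain ⟨u, rfl⟩ := hγ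
  obtain ⟨i, hui, hi⟩ := exists_apply_nonpos_single_notMem_span h0 hmin hlt
  rw [← dotR_single_one u i] at hui
  obtain ⟨w, hsub, hwi, hspan⟩ := exists_suppFace_superset_span_eq_ker hdim h0 hui hi
  have hw : w ≠ 0 := fun h => by simp [h, dotR] at hwi
  refine ⟨⟨u, rfl⟩, h0, suppFace f w, ⟨w, rfl⟩,
    setDim_suppFace_of_span_eq_ker (hsub h0) hw hspan, hsub, fun u' hu' hface hnonneg => hu' ?_⟩
  exact eq_zero_of_suppFace_eq hdim (hsub h0) hspan hwi hface
    (dotR_single_one u' i ▸ hnonneg i)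
end
end

section
/- Let f ∈ ℂ[x,y] be a polynomial in two variables which is non-degenerate at infinity and satisfies dim Γ_∞(f) = 2. Then for all but finitely many c ∈ ℂ the fiber f^{-1}(c) = {(x,y) ∈ ℂ² : f(x,y) = c} is a connected subset of ℂ². -/
open scoped Classical

noncomputable section

/-!
Suppose that infinitely many fibers of `f` are disconnected. If `{f = c}` splits into two nonempty
closed pieces, make `f - c` monic in one variable `y` by a linear change of coordinates. The
power sums of the roots `y` in one piece are entire functions of polynomial growth of the
remaining variables, hence polynomials, so `f - c = P_c Q_c` with `P_c` and `Q_c` coprime nonunits.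

Stein's argument applies to the 1-forms `ω_c = Q_c dP_c`, all of degree less than `deg f`. They
satisfy `df ∧ ω_c = (f - c) dω_c`, and infinitely many of them are linearly dependent. Clearing
the denominators `f - c` in such a dependency gives a closed form proportional to `df`, i.e. `dh`
with `df ∧ dh = 0`. Were every such `h` a polynomial in `f`, comparing degrees would yield
`Q_c dP_c ∈ ℂ df` for some `c`, contrary to coprimality of `P_c` and `Q_c`.

That `h` is a polynomial in `f` is seen on leading forms for the outer normal `u` of a face of
positive dimension of the Newton polyhedron not through `0`: `df ∧ dh = 0` passes to leading forms, and non-degeneracy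
provides a simple prime factor of the leading form of `f`, which forces the leading form of `h` to
be a constant times a power of it. Subtracting that power of `f` lowers the `u`-degree of `h`.
-/

section PolynomialForms

open MvPolynomial

lemma totalDegree_pderiv_lt {σ R : Type*} [CommSemiring R] {i : σ} {p : MvPolynomial σ R}
    (h : pderiv i p ≠ 0) : (pderiv i p).totalDegree < p.totalDegree := by
  obtain ⟨m, hm, hdeg⟩ := Finset.exists_mem_eq_sup (pderiv i p).support
    (support_nonempty.2 h) fun m => m.sum fun _ e => e
  have hcoeff : coeff (m + Finsupp.single i 1) p ≠ 0 := fun h0 => by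
    simp [coeff_pderiv, h0] at hm
  have hle := le_totalDegree (mem_support_iff.2 hcoeff)
  rw [Finsupp.sum_add_index' (by simp) (by simp)] at hle
  simp only [Finsupp.sum_single_index] at hle
  rw [totalDegree, hdeg]
  omega

section Degree

variable {σ R : Type*} [CommRing R] [IsDomain R]

lemma eq_zero_of_dvd_of_totalDegree_lt {p q : MvPolynomial σ R} (h : p ∣ q)
    (hlt : q.totalDegree < p.totalDegree) : q = 0 := by
  obtain ⟨r, rfl⟩ := h
  by_contra h0
  rw [totalDegree_mul_of_isDomain (left_ne_zero_of_mul h0) (right_ne_zero_of_mul h0)] at hlt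
  omega

lemma pderiv_eq_zero_of_dvd {p : MvPolynomial σ R} {i : σ} (h : p ∣ pderiv i p) :
    pderiv i p = 0 := by
  by_contra h0
  exact h0 (eq_zero_of_dvd_of_totalDegree_lt h (totalDegree_pderiv_lt h0))

lemma totalDegree_mul_pderiv_le (i : σ) (p q : MvPolynomial σ R) :
    (q * pderiv i p).totalDegree ≤ (p * q).totalDegree - 1 := by
  by_cases h : q * pderiv i p = 0
  · simp [h]
  have hq := left_ne_zero_of_mul h
  have hp : p ≠ 0 := fun hp => h (by simp [hp])
  have hlt := totalDegree_pderiv_lt (right_ne_zero_of_mul h)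
  rw [totalDegree_mul_of_isDomain hq (right_ne_zero_of_mul h), totalDegree_mul_of_isDomain hp hq]
  omega

end Degree

section Coefficients

variable {σ R : Type*} [CommSemiring R]

lemma coeff_X_mul_pderiv (i : σ) (p : MvPolynomial σ R) (m : σ →₀ ℕ) :
    coeff m (X i * pderiv i p) = m i * coeff m p := by
  induction p using MvPolynomial.induction_on' with
  | monomial n a =>
    rw [X_mul_pderiv_monomial, coeff_smul, coeff_monomial, nsmul_eq_mul]
    split_ifs with h <;> simp [h]
  | add p q hp hq => rw [map_add, mul_add, coeff_add, coeff_add, hp, hq, mul_add]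

lemma pderiv_pderiv_comm (i j : σ) (p : MvPolynomial σ R) :
    pderiv i (pderiv j p) = pderiv j (pderiv i p) := by
  ext m
  by_cases hij : i = j
  · rw [hij]
  · rw [coeff_pderiv, coeff_pderiv, coeff_pderiv, coeff_pderiv, add_right_comm, Finsupp.add_apply,
      Finsupp.add_apply, Finsupp.single_eq_of_ne hij, Finsupp.single_eq_of_ne (Ne.symm hij),
      add_zero, add_zero, mul_right_comm]

end Coefficients

section CharZero

variable {σ k : Type*} [Field k] [CharZero k]

lemma isUnit_of_forall_pderiv_eq_zero {p : MvPolynomial σ k} (hp : p ≠ 0)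
    (h : ∀ i, pderiv i p = 0) : IsUnit p := by
  have hC : p = C (coeff 0 p) := by
    ext m
    rw [coeff_C]
    split_ifs with hm
    · rw [hm]
    · obtain ⟨i, hi⟩ := Finsupp.ne_iff.1 (Ne.symm hm)
      have := coeff_X_mul_pderiv i p m
      rw [h i, mul_zero, coeff_zero, eq_comm, mul_eq_zero, Nat.cast_eq_zero] at this
      exact this.resolve_left hi
  have hcoeff : coeff 0 p ≠ 0 := fun h0 => hp (by rw [hC, h0, C_0])
  rw [hC]
  exact hcoeff.isUnit.map C

lemma exists_pderiv_ne_zero {p : MvPolynomial σ k} (hp : p ≠ 0) (h : ¬ IsUnit p) :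
    ∃ i, pderiv i p ≠ 0 := by
  by_contra! h0
  exact h (isUnit_of_forall_pderiv_eq_zero hp h0)

lemma not_dvd_pderiv_of_not_isUnit {p : MvPolynomial σ k} (hp : p ≠ 0) (h : ¬ IsUnit p) :
    ∃ i, ¬ p ∣ pderiv i p := by
  obtain ⟨i, hi⟩ := exists_pderiv_ne_zero hp h
  exact ⟨i, fun hdvd => hi (pderiv_eq_zero_of_dvd hdvd)⟩

end CharZero

/-- The differential `df` of a polynomial, a polynomial `1`-form `Σ ωᵢ dxᵢ` being encoded by its
family of coefficients `ω`. -/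
def grad {σ R : Type*} [CommSemiring R] (f : MvPolynomial σ R) : σ → MvPolynomial σ R :=
  fun i => pderiv i f

/-- The exterior product `α ∧ β` of two polynomial `1`-forms; its `(i, j)` entry is the coefficient
of `dxᵢ ∧ dxⱼ`. It is linear in the second factor. -/
def wedge {σ R : Type*} [CommRing R] (α : σ → MvPolynomial σ R) :
    (σ → MvPolynomial σ R) →ₗ[MvPolynomial σ R] (σ → σ → MvPolynomial σ R) where
  toFun β i j := α i * β j - α j * β i
  map_add' β γ := by ext1 i; ext1 j; simp only [Pi.add_apply]; ring
  map_smul' g β := by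
    ext1 i; ext1 j; simp only [Pi.smul_apply, smul_eq_mul, RingHom.id_apply]; ring

/-- The exterior derivative `dω` of a polynomial `1`-form; its `(i, j)` entry is the coefficient of
`dxᵢ ∧ dxⱼ`. -/
def extDeriv₁ {σ R : Type*} [CommRing R] :
    (σ → MvPolynomial σ R) →ₗ[R] (σ → σ → MvPolynomial σ R) where
  toFun ω i j := pderiv i (ω j) - pderiv j (ω i)
  map_add' ω θ := by ext1 i; ext1 j; simp only [Pi.add_apply, map_add]; ring
  map_smul' c ω := by
    ext1 i; ext1 j; simp only [Pi.smul_apply, Derivation.map_smul, RingHom.id_apply, smul_sub]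

section Forms

variable {σ R : Type*} [CommRing R]

lemma grad_apply (f : MvPolynomial σ R) (i : σ) : grad f i = pderiv i f := rfl

lemma wedge_apply (α β : σ → MvPolynomial σ R) (i j : σ) :
    wedge α β i j = α i * β j - α j * β i := rfl

lemma extDeriv₁_apply (ω : σ → MvPolynomial σ R) (i j : σ) :
    extDeriv₁ ω i j = pderiv i (ω j) - pderiv j (ω i) := rfl

lemma grad_mul (p q : MvPolynomial σ R) : grad (p * q) = p • grad q + q • grad p := by
  ext1 i
  simp [grad_apply, Derivation.leibniz]

lemma grad_sub_C (f : MvPolynomial σ R) (c : R) : grad (f - C c) = grad f := by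
  ext1 i
  simp [grad_apply]

lemma grad_aeval (f : MvPolynomial σ R) (G : Polynomial R) :
    grad (Polynomial.aeval f G) = Polynomial.aeval f (Polynomial.derivative G) • grad f := by
  ext1 i
  simp [grad_apply, Derivation.map_aeval]

lemma wedge_self (α : σ → MvPolynomial σ R) : wedge α α = 0 := by
  ext1 i; ext1 j
  simp [wedge_apply, mul_comm]

lemma wedge_grad_sub_C_mul_pow {f h : MvPolynomial σ R} (c : R) (n : ℕ)
    (hfh : wedge (grad f) (grad h) = 0) : wedge (grad f) (grad (h - C c * f ^ n)) = 0 := by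
  have hgrad : grad (h - C c * f ^ n) =
      grad h - (C c * ((n : MvPolynomial σ R) * f ^ (n - 1))) • grad f := by
    ext1 i
    simp only [grad_apply, map_sub, pderiv_C_mul, pderiv_pow, Pi.sub_apply, Pi.smul_apply,
      smul_eq_mul]
    ring
  rw [hgrad, map_sub, map_smul, wedge_self, smul_zero, hfh, sub_zero]

lemma extDeriv₁_smul (g : MvPolynomial σ R) (ω : σ → MvPolynomial σ R) :
    extDeriv₁ (g • ω) = wedge (grad g) ω + g • extDeriv₁ ω := by
  ext1 i; ext1 j
  simp only [extDeriv₁_apply, wedge_apply, grad_apply, Pi.smul_apply, Pi.add_apply, smul_eq_mul,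
    Derivation.leibniz]
  ring

lemma extDeriv₁_grad (p : MvPolynomial σ R) : extDeriv₁ (grad p) = 0 := by
  ext1 i; ext1 j
  simp [extDeriv₁_apply, grad_apply, pderiv_pderiv_comm i j p]

end Forms

/-- Contract a closed form `ω` with the Euler field to get `θ = Σ xᵢ ωᵢ`; a primitive is obtained by
dividing the coefficient of each monomial of `θ` by its degree. -/
lemma exists_grad_eq_of_extDeriv₁_eq_zero {σ k : Type*} [Finite σ] [Field k] [CharZero k]
    {ω : σ → MvPolynomial σ k} (hω : extDeriv₁ ω = 0) : ∃ p, grad p = ω := by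
  cases nonempty_fintype σ
  have hsymm (i j : σ) (m : σ →₀ ℕ) :
      (m i : k) * coeff m (X j * ω j) = m j * coeff m (X i * ω i) := by
    have hij : pderiv i (ω j) = pderiv j (ω i) :=
      sub_eq_zero.1 ((extDeriv₁_apply ω i j).symm.trans (congrFun (congrFun hω i) j))
    by_cases h : i = j
    · rw [h]
    rw [← coeff_X_mul_pderiv, ← coeff_X_mul_pderiv]
    congr 1
    simp only [Derivation.leibniz, smul_eq_mul, pderiv_X_of_ne h, pderiv_X_of_ne (Ne.symm h), hij]
    ring
  set θ := ∑ i, X i * ω i with hθ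
  set p : MvPolynomial σ k := ∑ m ∈ θ.support, monomial m (coeff m θ / m.degree) with hp
  have hcoeff (m : σ →₀ ℕ) : coeff m p = coeff m θ / m.degree := by
    rw [hp, coeff_sum]
    simp only [coeff_monomial, Finset.sum_ite_eq', mem_support_iff]
    split_ifs with h
    · rfl
    · simp [not_not.1 h]
  refine ⟨p, funext fun i => mul_left_cancel₀ (X_ne_zero i) ?_⟩
  ext m
  rw [grad_apply, coeff_X_mul_pderiv, hcoeff]
  by_cases hm : m = 0
  · simp [hm, coeff_X_mul']
  have hdeg : (m.degree : k) ≠ 0 := by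
    simpa [Finsupp.degree_eq_zero_iff] using hm
  rw [mul_div_assoc', div_eq_iff hdeg, hθ, coeff_sum, Finset.mul_sum, Finsupp.degree_eq_sum,
    Nat.cast_sum, Finset.mul_sum]
  refine Finset.sum_congr rfl fun j _ => ?_
  rw [hsymm i j m, mul_comm]

end PolynomialForms

section CoprimeFactorizations

open MvPolynomial

section Factors

variable {σ k : Type*} [Field k]

lemma wedge_grad_mul_smul_grad (P Q : MvPolynomial σ k) :
    wedge (grad (P * Q)) (Q • grad P) = (P * Q) • extDeriv₁ (Q • grad P) := by
  rw [extDeriv₁_smul, extDeriv₁_grad, smul_zero, add_zero, grad_mul]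
  ext1 i; ext1 j
  simp only [wedge_apply, Pi.smul_apply, Pi.add_apply, smul_eq_mul]
  ring

lemma smul_grad_ne_smul_grad_mul [CharZero k] {P Q : MvPolynomial σ k} (hPQ : IsCoprime P Q)
    (hP₀ : P ≠ 0) (hQ₀ : Q ≠ 0) (hP : ¬ IsUnit P) (hQ : ¬ IsUnit Q) (a : k) :
    Q • grad P ≠ a • grad (P * Q) := by
  intro h
  have heq (i : σ) : (1 - C a) * (Q * pderiv i P) = C a * (P * pderiv i Q) := by
    have := congrFun h i
    rw [grad_mul] at this
    simp only [Pi.smul_apply, Pi.add_apply, smul_eq_mul, grad_apply, smul_eq_C_mul] at this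
    linear_combination this
  by_cases ha : a = 1
  · refine hQ (isUnit_of_forall_pderiv_eq_zero hQ₀ fun i => ?_)
    have := heq i
    simpa [ha, hP₀] using this.symm
  · obtain ⟨i, hi⟩ := not_dvd_pderiv_of_not_isUnit hP₀ hP
    have hunit : IsUnit (1 - C a : MvPolynomial σ k) := by
      rw [← C_1, ← C_sub]
      exact (sub_ne_zero.2 (Ne.symm ha)).isUnit.map C
    have hdvd : P ∣ (1 - C a) * (Q * pderiv i P) := by
      rw [heq i]
      exact (dvd_mul_right P _).mul_left _
    exact hi (hPQ.dvd_of_dvd_mul_left (hunit.dvd_mul_left.1 hdvd))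

end Factors

section Interpolation

variable {σ k : Type*} [Field k]

/-- The form `Σ_c l_c g_c(f) ω_c`, where `g_c = ∏_{b ∈ s, b ≠ c} (X - b)`: the combination
`Σ_c l_c ω_c / (f - c)` with its denominators cleared. -/
def interpolationForm (f : MvPolynomial σ k) (s : Finset k) (l : k → k)
    (ω : k → σ → MvPolynomial σ k) : σ → MvPolynomial σ k :=
  ∑ c ∈ s, l c • Polynomial.aeval f (Lagrange.nodal (s.erase c) id) • ω c

variable {f : MvPolynomial σ k} {s : Finset k} {ω : k → σ → MvPolynomial σ k}

lemma wedge_grad_interpolationForm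
    (hω : ∀ c ∈ s, wedge (grad f) (ω c) = (f - C c) • extDeriv₁ (ω c)) (l : k → k) :
    wedge (grad f) (interpolationForm f s l ω) =
      Polynomial.aeval f (Lagrange.nodal s id) • extDeriv₁ (∑ c ∈ s, l c • ω c) := by
  simp only [interpolationForm, map_sum, Finset.smul_sum]
  refine Finset.sum_congr rfl fun c hc => ?_
  rw [Lagrange.nodal_eq_mul_nodal_erase hc, LinearMap.map_smul_of_tower, map_smul, hω c hc,
    map_smul, smul_comm _ (l c), map_mul, mul_comm, mul_smul]
  simp [algebraMap_eq]

lemma extDeriv₁_interpolationForm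
    (hω : ∀ c ∈ s, wedge (grad f) (ω c) = (f - C c) • extDeriv₁ (ω c)) (l : k → k) :
    extDeriv₁ (interpolationForm f s l ω) =
      Polynomial.aeval f (Polynomial.derivative (Lagrange.nodal s id)) •
        extDeriv₁ (∑ c ∈ s, l c • ω c) := by
  simp only [interpolationForm, map_sum, Finset.smul_sum]
  refine Finset.sum_congr rfl fun c hc => ?_
  rw [Lagrange.nodal_eq_mul_nodal_erase hc, map_smul, extDeriv₁_smul, grad_aeval, map_smul,
    smul_comm _ (l c)]
  congr 1
  ext1 i; ext1 j
  have hij := congrFun (congrFun (hω c hc) i) j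
  simp only [wedge_apply, Pi.smul_apply, Pi.add_apply, smul_eq_mul, Polynomial.derivative_mul,
    Polynomial.derivative_X, Polynomial.derivative_C, map_add, map_mul, map_sub,
    Polynomial.aeval_X, Polynomial.aeval_C, algebraMap_eq, id_eq, sub_zero, one_mul] at hij ⊢
  linear_combination
    Polynomial.aeval f (Polynomial.derivative (Lagrange.nodal (s.erase c) id)) * hij

lemma sub_C_dvd_aeval_sub_C (f : MvPolynomial σ k) (G : Polynomial k) (c : k) :
    f - C c ∣ Polynomial.aeval f G - C (G.eval c) := by
  have h := map_dvd (Polynomial.aeval f)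
    (Polynomial.dvd_iff_isRoot.2 (show (G - Polynomial.C (G.eval c)).IsRoot c by simp))
  simpa [algebraMap_eq] using h

lemma sub_C_dvd_interpolationForm_sub {c : k} (hc : c ∈ s) (l : k → k) (i : σ) :
    f - C c ∣ interpolationForm f s l ω i -
      C (l c * (Lagrange.nodal (s.erase c) id).eval c) * ω c i := by
  simp only [interpolationForm, Finset.sum_apply, Pi.smul_apply, smul_eq_mul, smul_eq_C_mul, C_mul]
  rw [← Finset.add_sum_erase s _ hc, add_sub_right_comm]
  refine dvd_add ?_ (Finset.dvd_sum fun b hb => ?_)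
  · rw [mul_assoc, ← mul_sub, ← sub_mul]
    exact ((sub_C_dvd_aeval_sub_C f _ c).mul_right _).mul_left _
  · refine (Dvd.dvd.mul_right ?_ _).mul_left _
    have hcb : c ∈ s.erase b := Finset.mem_erase.2 ⟨(Finset.ne_of_mem_erase hb).symm, hc⟩
    rw [Lagrange.nodal_eq_mul_nodal_erase hcb, map_mul]
    simp [algebraMap_eq]

end Interpolation

section Finiteness

variable {σ k : Type*} [Field k]

lemma totalDegree_sub_C (f : MvPolynomial σ k) (c : k) :
    (f - C c).totalDegree = f.totalDegree := by
  refine le_antisymm (totalDegree_sub_C_le f c) ?_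
  have h := totalDegree_sub_C_le (f - C c) (-c)
  rwa [C_neg, sub_neg_eq_add, sub_add_cancel] at h

lemma exists_sum_smul_eq_zero_of_infinite [Finite σ] {S : Set k} (hS : S.Infinite) {N : ℕ}
    {ω : k → σ → MvPolynomial σ k} (hω : ∀ c ∈ S, ∀ i, (ω c i).totalDegree ≤ N) :
    ∃ (s : Finset k) (l : k → k), ↑s ⊆ S ∧ ∑ c ∈ s, l c • ω c = 0 ∧ ∃ c ∈ s, l c ≠ 0 := by
  suffices h : ¬ LinearIndepOn k ω S by
    rw [linearIndepOn_iff'] at h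
    push Not at h
    exact h
  intro h
  let ω' (c : S) (i : σ) : restrictTotalDegree σ k N :=
    ⟨ω c i, (mem_restrictTotalDegree σ N _).2 (hω c c.2 i)⟩
  have h' : LinearIndependent k ω' :=
    LinearIndependent.of_comp ((restrictTotalDegree σ k N).subtype.compLeft σ) h
  have : Finite S := h'.finite_of_isNoetherian
  exact hS S.toFinite

variable [CharZero k]

lemma smul_eq_smul_grad_of_sum_eq_zero [Finite σ] {f : MvPolynomial σ k} (hf : 0 < f.totalDegree)
    (hcent : ∀ h, wedge (grad f) (grad h) = 0 → h ∈ Algebra.adjoin k {f})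
    {s : Finset k} {ω : k → σ → MvPolynomial σ k} {l : k → k}
    (hω : ∀ c ∈ s, wedge (grad f) (ω c) = (f - C c) • extDeriv₁ (ω c))
    (hdeg : ∀ c ∈ s, ∀ i, (ω c i).totalDegree ≤ f.totalDegree - 1)
    (hsum : ∑ c ∈ s, l c • ω c = 0) {c : k} (hc : c ∈ s) (hl : l c ≠ 0) :
    ∃ a : k, ω c = a • grad f := by
  obtain ⟨h, hh⟩ := exists_grad_eq_of_extDeriv₁_eq_zero (ω := interpolationForm f s l ω) <| by
    rw [extDeriv₁_interpolationForm hω, hsum, map_zero, smul_zero]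
  have hmem := hcent h <| by
    rw [hh, wedge_grad_interpolationForm hω, hsum, map_zero, smul_zero]
  rw [Algebra.adjoin_singleton_eq_range_aeval] at hmem
  obtain ⟨G, rfl⟩ := hmem
  change grad (Polynomial.aeval f G) = _ at hh
  rw [grad_aeval] at hh
  set a := (Polynomial.derivative G).eval c
  set b := l c * (Lagrange.nodal (s.erase c) id).eval c
  have hb : b ≠ 0 := mul_ne_zero hl <| Lagrange.eval_nodal_not_at_node fun d hd =>
    (Finset.ne_of_mem_erase hd).symm
  have hzero (i : σ) : C a * pderiv i f - C b * ω c i = 0 := by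
    refine eq_zero_of_dvd_of_totalDegree_lt (p := f - C c) ?_ ?_
    · have h₁ : f - C c ∣ _ := sub_C_dvd_interpolationForm_sub (f := f) (ω := ω) hc l i
      have h₂ := (sub_C_dvd_aeval_sub_C f (Polynomial.derivative G) c).mul_right (pderiv i f)
      rw [← hh, Pi.smul_apply, smul_eq_mul, grad_apply] at h₁
      convert dvd_sub h₁ h₂ using 1
      ring
    · have hlt : f.totalDegree - 1 < (f - C c).totalDegree := by rw [totalDegree_sub_C]; omega
      refine lt_of_le_of_lt ((mem_restrictTotalDegree σ _ _).1 ?_) hlt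
      rw [C_mul', C_mul']
      refine Submodule.sub_mem _ (Submodule.smul_mem _ _ ?_) (Submodule.smul_mem _ _ ?_)
      · simpa [mem_restrictTotalDegree] using totalDegree_mul_pderiv_le i f 1
      · exact (mem_restrictTotalDegree σ _ _).2 (hdeg c hc i)
  refine ⟨b⁻¹ * a, funext fun i => ?_⟩
  rw [Pi.smul_apply, mul_smul, grad_apply, eq_inv_smul_iff₀ hb, smul_eq_C_mul, smul_eq_C_mul,
    sub_eq_zero.1 (hzero i)]

theorem finite_setOf_coprime_factorization [Finite σ] {f : MvPolynomial σ k}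
    (hf : 0 < f.totalDegree)
    (hcent : ∀ h, wedge (grad f) (grad h) = 0 → h ∈ Algebra.adjoin k {f}) :
    {c : k | ∃ P Q, f - C c = P * Q ∧ IsCoprime P Q ∧ ¬ IsUnit P ∧ ¬ IsUnit Q}.Finite := by
  by_contra hS
  set S := {c : k | ∃ P Q, f - C c = P * Q ∧ IsCoprime P Q ∧ ¬ IsUnit P ∧ ¬ IsUnit Q}
  have hfac (c : k) (hc : c ∈ S) := hc
  choose! P Q hPQ hcop hP hQ using hfac
  have hdeg (c : k) (hc : c ∈ S) (i : σ) :
      ((Q c • grad (P c)) i).totalDegree ≤ f.totalDegree - 1 := by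
    rw [← totalDegree_sub_C f c, hPQ c hc]
    exact totalDegree_mul_pderiv_le i (P c) (Q c)
  obtain ⟨s, l, hsS, hsum, c, hc, hl⟩ := exists_sum_smul_eq_zero_of_infinite hS hdeg
  obtain ⟨a, ha⟩ := smul_eq_smul_grad_of_sum_eq_zero hf hcent (fun b hb => by
    rw [← grad_sub_C f b, hPQ b (hsS hb), wedge_grad_mul_smul_grad])
    (fun b hb => hdeg b (hsS hb)) hsum hc hl
  have hne : P c * Q c ≠ 0 := fun h0 => hf.ne' <| by
    rw [← totalDegree_sub_C f c, hPQ c (hsS hc), h0, totalDegree_zero]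
  rw [← grad_sub_C f c, hPQ c (hsS hc)] at ha
  exact smul_grad_ne_smul_grad_mul (hcop c (hsS hc)) (left_ne_zero_of_mul hne)
    (right_ne_zero_of_mul hne) (hP c (hsS hc)) (hQ c (hsS hc)) a ha

end Finiteness

end CoprimeFactorizations

section LeadingForms

open MvPolynomial

section OrderedWeights

variable {σ R M : Type*} [CommSemiring R] [AddCommMonoid M] {w : σ → M}

lemma weightedHomogeneousComponent_X_mul_pderiv (i : σ) (d : M) (p : MvPolynomial σ R) :
    weightedHomogeneousComponent w d (X i * pderiv i p) =
      X i * pderiv i (weightedHomogeneousComponent w d p) := by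
  ext m
  rw [coeff_X_mul_pderiv, coeff_weightedHomogeneousComponent, coeff_weightedHomogeneousComponent,
    coeff_X_mul_pderiv, mul_ite, mul_zero]

lemma support_X_mul_pderiv_subset (i : σ) (p : MvPolynomial σ R) :
    (X i * pderiv i p).support ⊆ p.support := fun m hm => by
  rw [mem_support_iff, coeff_X_mul_pderiv] at hm
  exact mem_support_iff.2 (right_ne_zero_of_mul hm)

variable [LinearOrder M] [IsOrderedCancelAddMonoid M]

lemma weightedHomogeneousComponent_mul_of_le {d e : M} {p q : MvPolynomial σ R}
    (hp : ∀ m ∈ p.support, Finsupp.weight w m ≤ d)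
    (hq : ∀ m ∈ q.support, Finsupp.weight w m ≤ e) :
    weightedHomogeneousComponent w (d + e) (p * q) =
      weightedHomogeneousComponent w d p * weightedHomogeneousComponent w e q := by
  ext m
  rw [coeff_weightedHomogeneousComponent, coeff_mul, coeff_mul,
    ← Finset.sum_const_zero (s := Finset.HasAntidiagonal.antidiagonal m),
    ← Finset.sum_ite_irrel]
  refine Finset.sum_congr rfl fun x hx => ?_
  obtain rfl := Finset.HasAntidiagonal.mem_antidiagonal.1 hx
  rw [coeff_weightedHomogeneousComponent, coeff_weightedHomogeneousComponent, map_add]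
  by_cases hx₁ : coeff x.1 p = 0
  · simp [hx₁]
  by_cases hx₂ : coeff x.2 q = 0
  · simp [hx₂]
  have h := add_eq_add_iff_eq_and_eq (hp _ (mem_support_iff.2 hx₁)) (hq _ (mem_support_iff.2 hx₂))
  by_cases h₁ : Finsupp.weight w x.1 = d <;> by_cases h₂ : Finsupp.weight w x.2 = e <;>
    simp [h, h₁, h₂]

lemma weight_le_of_mem_support_mul {d e : M} {p q : MvPolynomial σ R}
    (hp : ∀ m ∈ p.support, Finsupp.weight w m ≤ d)
    (hq : ∀ m ∈ q.support, Finsupp.weight w m ≤ e) :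
    ∀ m ∈ (p * q).support, Finsupp.weight w m ≤ d + e := fun m hm => by
  obtain ⟨x, hx, y, hy, rfl⟩ := Finset.mem_add.1 (support_mul p q hm)
  rw [map_add]
  exact add_le_add (hp x hx) (hq y hy)

lemma weight_le_of_mem_support_pow {d : M} {p : MvPolynomial σ R}
    (hp : ∀ m ∈ p.support, Finsupp.weight w m ≤ d) (n : ℕ) :
    ∀ m ∈ (p ^ n).support, Finsupp.weight w m ≤ n • d := by
  induction n with
  | zero =>
    intro m hm
    rw [pow_zero, mem_support_iff, coeff_one] at hm
    simp [(ite_ne_right_iff.1 hm).1.symm]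
  | succ n ih =>
    rw [pow_succ, succ_nsmul]
    exact weight_le_of_mem_support_mul ih hp

lemma weightedHomogeneousComponent_pow_of_le {d : M} {p : MvPolynomial σ R}
    (hp : ∀ m ∈ p.support, Finsupp.weight w m ≤ d) (n : ℕ) :
    weightedHomogeneousComponent w (n • d) (p ^ n) = weightedHomogeneousComponent w d p ^ n := by
  induction n with
  | zero =>
    rw [pow_zero, pow_zero, zero_nsmul]
    exact (isWeightedHomogeneous_one R w).weightedHomogeneousComponent_same
  | succ n ih =>
    rw [pow_succ, succ_nsmul,
      weightedHomogeneousComponent_mul_of_le (weight_le_of_mem_support_pow hp n) hp, ih, pow_succ]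

lemma wedge_grad_weightedHomogeneousComponent {R : Type*} [CommRing R] [IsDomain R] {d e : M}
    {f h : MvPolynomial σ R} (hf : ∀ m ∈ f.support, Finsupp.weight w m ≤ d)
    (hh : ∀ m ∈ h.support, Finsupp.weight w m ≤ e) (hfh : wedge (grad f) (grad h) = 0) :
    wedge (grad (weightedHomogeneousComponent w d f))
      (grad (weightedHomogeneousComponent w e h)) = 0 := by
  have hcomp (i j : σ) :
      weightedHomogeneousComponent w (d + e) ((X i * pderiv i f) * (X j * pderiv j h)) =
        (X i * X j) * (pderiv i (weightedHomogeneousComponent w d f) *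
          pderiv j (weightedHomogeneousComponent w e h)) := by
    rw [weightedHomogeneousComponent_mul_of_le
      (fun m hm => hf m (support_X_mul_pderiv_subset i f hm))
      (fun m hm => hh m (support_X_mul_pderiv_subset j h hm)),
      weightedHomogeneousComponent_X_mul_pderiv, weightedHomogeneousComponent_X_mul_pderiv]
    ring
  ext1 i; ext1 j
  have hij := congrFun (congrFun hfh i) j
  simp only [wedge_apply, grad_apply, Pi.zero_apply] at hij ⊢
  have heq : (X i * pderiv i f) * (X j * pderiv j h) =
      (X j * pderiv j f) * (X i * pderiv i h) := by
    linear_combination X i * X j * hij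
  replace heq := congrArg (weightedHomogeneousComponent w (d + e)) heq
  rw [hcomp, hcomp] at heq
  refine mul_left_cancel₀ (mul_ne_zero (X_ne_zero i) (X_ne_zero (R := R) j)) ?_
  linear_combination heq

end OrderedWeights

section Euler

variable {σ K k : Type*} [Field K] [Field k] [Algebra K k] {w : σ → K}

lemma sum_smul_X_mul_pderiv_of_isWeightedHomogeneous [Fintype σ] {φ : MvPolynomial σ k} {d : K}
    (hφ : IsWeightedHomogeneous w φ d) : ∑ i, w i • (X i * pderiv i φ) = d • φ := by
  ext m
  simp only [coeff_sum, coeff_smul, coeff_X_mul_pderiv]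
  by_cases hm : coeff m φ = 0
  · simp [hm]
  · rw [← hφ hm, Finsupp.weight_apply, Finsupp.sum_fintype _ _ (by simp), Finset.sum_smul]
    refine Finset.sum_congr rfl fun i _ => ?_
    rw [← nsmul_eq_mul, smul_comm, smul_assoc]

lemma mul_pderiv_eq_of_wedge_grad_eq_zero [Finite σ] {F H : MvPolynomial σ k} {d e : K}
    (hF : IsWeightedHomogeneous w F d) (hH : IsWeightedHomogeneous w H e) (hd : d ≠ 0)
    (hFH : wedge (grad F) (grad H) = 0) (i : σ) :
    F * pderiv i H = C (algebraMap K k (e / d)) * (H * pderiv i F) := by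
  cases nonempty_fintype σ
  have hsum : d • (F * pderiv i H) = e • (H * pderiv i F) := by
    rw [← smul_mul_assoc, ← smul_mul_assoc,
      ← sum_smul_X_mul_pderiv_of_isWeightedHomogeneous hF,
      ← sum_smul_X_mul_pderiv_of_isWeightedHomogeneous hH, Finset.sum_mul, Finset.sum_mul]
    refine Finset.sum_congr rfl fun j _ => ?_
    have hij := congrFun (congrFun hFH i) j
    simp only [wedge_apply, grad_apply, Pi.zero_apply] at hij
    rw [smul_mul_assoc, smul_mul_assoc]
    congr 1
    linear_combination - X j * hij
  rw [← smul_eq_C_mul, algebraMap_smul, div_eq_inv_mul, mul_smul, ← hsum, inv_smul_smul₀ hd]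

end Euler

section LogarithmicDerivative

variable {σ k : Type*} [Field k] [CharZero k]

lemma exists_eq_C_mul_of_mul_pderiv_eq {a b : MvPolynomial σ k} (ha : a ≠ 0) (hb : b ≠ 0)
    (h : ∀ i, b * pderiv i a = a * pderiv i b) : ∃ c : k, a = C c * b := by
  obtain ⟨a', b', g, hrel, rfl, rfl⟩ := UniqueFactorizationMonoid.exists_reduced_factors' a b hb
  have hg : g ≠ 0 := left_ne_zero_of_mul ha
  have h' (i : σ) : b' * pderiv i a' = a' * pderiv i b' := by
    refine mul_left_cancel₀ (mul_ne_zero hg hg) ?_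
    have := h i
    simp only [Derivation.leibniz, smul_eq_mul] at this
    linear_combination this
  obtain ⟨u, -, rfl⟩ := isUnit_iff_eq_C_of_isReduced.1 <|
    isUnit_of_forall_pderiv_eq_zero (right_ne_zero_of_mul ha) fun i =>
      pderiv_eq_zero_of_dvd (hrel.dvd_of_dvd_mul_left (h' i ▸ dvd_mul_right a' _))
  obtain ⟨v, hv, rfl⟩ := isUnit_iff_eq_C_of_isReduced.1 <|
    isUnit_of_forall_pderiv_eq_zero (right_ne_zero_of_mul hb) fun i =>
      pderiv_eq_zero_of_dvd (hrel.symm.dvd_of_dvd_mul_left ((h' i).symm ▸ dvd_mul_right b' _))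
  refine ⟨u / v, ?_⟩
  rw [mul_left_comm, ← C_mul, div_mul_cancel₀ u hv.ne_zero]

/-- Compare the orders of vanishing along the simple factor `q`. -/
lemma exists_eq_natCast_of_mul_pderiv_eq {q a b : MvPolynomial σ k} {r : k} (hq : Prime q)
    (hb : ¬ q ∣ b) (ha : a ≠ 0) (h : ∀ i, q * b * pderiv i a = C r * (a * pderiv i (q * b))) :
    ∃ n : ℕ, r = n := by
  obtain ⟨a', ha', hqa'⟩ :=
    (FiniteMultiplicity.of_prime_left hq ha).exists_eq_pow_mul_and_not_dvd
  set n := multiplicity q a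
  obtain ⟨i, hi⟩ := not_dvd_pderiv_of_not_isUnit hq.ne_zero hq.not_isUnit
  refine ⟨n, by_contra fun hn => ?_⟩
  have hunit : IsUnit (C (r - n) : MvPolynomial σ k) := (sub_ne_zero.2 hn).isUnit.map C
  have hpow : q * pderiv i (q ^ n) = n * q ^ n * pderiv i q := by
    rw [pderiv_pow]
    cases n with
    | zero => simp
    | succ n => rw [Nat.add_sub_cancel, pow_succ]; ring
  have hmul : C (r - n) * (a' * b * pderiv i q) =
      q * (b * pderiv i a' - C r * a' * pderiv i b) := by
    refine mul_left_cancel₀ (pow_ne_zero n hq.ne_zero) ?_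
    have := h i
    simp only [ha', Derivation.leibniz, smul_eq_mul] at this
    rw [C_sub, map_natCast]
    linear_combination -this + b * a' * hpow
  have hdvd : q ∣ a' * b * pderiv i q := hunit.dvd_mul_left.1 (hmul ▸ dvd_mul_right q _)
  rcases hq.dvd_or_dvd hdvd with hdvd | hdvd
  · exact (hq.dvd_or_dvd hdvd).elim hqa' hb
  · exact hi hdvd

lemma exists_eq_C_mul_pow_of_mul_pderiv_eq {q a b : MvPolynomial σ k} {r : k} (hq : Prime q)
    (hb : ¬ q ∣ b) (ha : a ≠ 0) (h : ∀ i, q * b * pderiv i a = C r * (a * pderiv i (q * b))) :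
    ∃ (n : ℕ) (c : k), r = n ∧ a = C c * (q * b) ^ n := by
  obtain ⟨n, rfl⟩ := exists_eq_natCast_of_mul_pderiv_eq hq hb ha h
  have hqb : q * b ≠ 0 := mul_ne_zero hq.ne_zero fun hb₀ => hb (hb₀ ▸ dvd_zero q)
  obtain ⟨c, hc⟩ := exists_eq_C_mul_of_mul_pderiv_eq ha (pow_ne_zero n hqb) fun i => by
    rw [pderiv_pow]
    cases n with
    | zero => simpa [hqb] using h i
    | succ n =>
      have := h i
      rw [map_natCast] at this
      rw [Nat.add_sub_cancel, pow_succ]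
      linear_combination (q * b) ^ n * this
  exact ⟨n, c, rfl, hc⟩

end LogarithmicDerivative

section Centralizer

variable {σ K k : Type*} [Finite σ] [Field K] [LinearOrder K] [IsStrictOrderedRing K]
  [Field k] [CharZero k] [Algebra K k] {w : σ → K} {d : K} {f q b : MvPolynomial σ k}

lemma exists_leadingForm_eq_C_mul_pow (hd : 0 < d)
    (hf : ∀ m ∈ f.support, Finsupp.weight w m ≤ d)
    (hlead : weightedHomogeneousComponent w d f = q * b) (hq : Prime q) (hb : ¬ q ∣ b)
    {h : MvPolynomial σ k} (hh : h ≠ 0) (hfh : wedge (grad f) (grad h) = 0) :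
    ∃ (n : ℕ) (c : k), (∀ m ∈ h.support, Finsupp.weight w m ≤ n • d) ∧
      (∃ m ∈ h.support, Finsupp.weight w m = n • d) ∧
      weightedHomogeneousComponent w (n • d) h = C c * weightedHomogeneousComponent w d f ^ n := by
  obtain ⟨m, hm, hmax⟩ := h.support.exists_max_image (Finsupp.weight w) (support_nonempty.2 hh)
  set e := Finsupp.weight w m
  have hne : weightedHomogeneousComponent w e h ≠ 0 := fun h₀ => mem_support_iff.1 hm <| by
    rw [← coeff_zero m, ← h₀, coeff_weightedHomogeneousComponent, if_pos rfl]
  have hwedge := wedge_grad_weightedHomogeneousComponent hf hmax hfh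
  have hode := mul_pderiv_eq_of_wedge_grad_eq_zero
    (weightedHomogeneousComponent_isWeightedHomogeneous d f)
    (weightedHomogeneousComponent_isWeightedHomogeneous e h) hd.ne' hwedge
  rw [hlead] at hode ⊢
  obtain ⟨n, c, hn, hc⟩ := exists_eq_C_mul_pow_of_mul_pderiv_eq hq hb hne hode
  have he : e = n • d := by
    rw [← map_natCast (algebraMap K k)] at hn
    rw [nsmul_eq_mul, ← div_eq_iff hd.ne', (algebraMap K k).injective hn]
  exact ⟨n, c, he ▸ hmax, ⟨m, hm, he⟩, he ▸ hc⟩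

theorem mem_adjoin_of_wedge_grad_eq_zero (hd : 0 < d)
    (hf : ∀ m ∈ f.support, Finsupp.weight w m ≤ d)
    (hlead : weightedHomogeneousComponent w d f = q * b) (hq : Prime q) (hb : ¬ q ∣ b)
    {h : MvPolynomial σ k} (hfh : wedge (grad f) (grad h) = 0) : h ∈ Algebra.adjoin k {f} := by
  suffices hlt : ∀ (N : ℕ) (h : MvPolynomial σ k), wedge (grad f) (grad h) = 0 →
      (∀ m ∈ h.support, Finsupp.weight w m < N • d) → h ∈ Algebra.adjoin k {f} by
    by_cases hh : h = 0
    · exact hh ▸ Subalgebra.zero_mem _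
    obtain ⟨n, -, hle, -, -⟩ := exists_leadingForm_eq_C_mul_pow hd hf hlead hq hb hh hfh
    exact hlt (n + 1) h hfh fun m hm => (hle m hm).trans_lt (by rw [succ_nsmul]; linarith)
  intro N
  induction N using Nat.strong_induction_on with
  | h N ih =>
  intro h hfh hN
  by_cases hh : h = 0
  · exact hh ▸ Subalgebra.zero_mem _
  obtain ⟨n, c, hle, ⟨m, hm, hmn⟩, hc⟩ :=
    exists_leadingForm_eq_C_mul_pow hd hf hlead hq hb hh hfh
  have hnN : n < N := (nsmul_lt_nsmul_iff_left hd).1 (hmn ▸ hN m hm)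
  have hmem : C c * f ^ n ∈ Algebra.adjoin k {f} := by
    rw [C_mul']
    exact Subalgebra.smul_mem _ (pow_mem (Algebra.self_mem_adjoin_singleton k f) n) c
  rw [← sub_add_cancel h (C c * f ^ n)]
  refine add_mem (ih n hnN _ (wedge_grad_sub_C_mul_pow c n hfh) fun m' hm' => ?_) hmem
  rw [mem_support_iff, coeff_sub, coeff_C_mul] at hm'
  refine lt_of_le_of_ne ?_ fun heq => hm' ?_
  · by_cases hm'h : coeff m' h = 0
    · refine weight_le_of_mem_support_pow hf n m' (mem_support_iff.2 fun h₀ => hm' ?_)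
      rw [hm'h, h₀, mul_zero, sub_zero]
    · exact hle m' (mem_support_iff.2 hm'h)
  · rw [← weightedHomogeneousComponent_pow_of_le hf, ← weightedHomogeneousComponent_C_mul] at hc
    have := congrArg (coeff m') hc
    rwa [coeff_weightedHomogeneousComponent, coeff_weightedHomogeneousComponent, if_pos heq,
      if_pos heq, coeff_C_mul, ← sub_eq_zero] at this

end Centralizer

end LeadingForms

section TorusZeros

lemma exists_ne_zero_isRoot {k : Type*} [Field k] [IsAlgClosed k] {p : Polynomial k}
    (hp : p.support.Nontrivial) : ∃ t, t ≠ 0 ∧ p.IsRoot t := by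
  have hp₀ : p ≠ 0 := Polynomial.support_nonempty.1 hp.nonempty
  obtain ⟨q, hpq, hq⟩ := Polynomial.exists_eq_pow_rootMultiplicity_mul_and_not_dvd p hp₀ 0
  rw [Polynomial.C_0, sub_zero] at hpq hq
  have hdeg : q.degree ≠ 0 := fun h => by
    rw [Polynomial.eq_C_of_degree_eq_zero h, mul_comm] at hpq
    have hcard := Polynomial.card_support_C_mul_X_pow_le_one (R := k) (c := q.coeff 0)
      (n := p.rootMultiplicity 0)
    rw [← hpq] at hcard
    exact (Finset.one_lt_card_iff_nontrivial.2 hp).not_ge hcard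
  obtain ⟨t, ht⟩ := IsAlgClosed.exists_root q hdeg
  refine ⟨t, ?_, ?_⟩
  · rintro rfl
    exact hq (Polynomial.X_dvd_iff.2 (by rwa [Polynomial.coeff_zero_eq_eval_zero]))
  · rw [hpq]
    exact Polynomial.root_mul_left_of_isRoot _ ht

open MvPolynomial

variable {σ k : Type*} [Field k]

lemma coeff_aeval_C_mul_X_pow (c : σ → k) (w : σ → ℕ) (p : MvPolynomial σ k) (n : ℕ) :
    (aeval (fun j => Polynomial.C (c j) * Polynomial.X ^ w j) p).coeff n =
      eval c (weightedHomogeneousComponent w n p) := by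
  induction p using MvPolynomial.induction_on' with
  | monomial m a =>
    have hm : aeval (fun j => Polynomial.C (c j) * Polynomial.X ^ w j) (monomial m a) =
        Polynomial.C (eval c (monomial m a)) * Polynomial.X ^ Finsupp.weight w m := by
      simp only [aeval_monomial, eval_monomial, mul_pow, Finsupp.prod, Finset.prod_mul_distrib,
        ← Polynomial.C_pow, ← map_prod, ← pow_mul, Finset.prod_pow_eq_pow_sum,
        Finsupp.weight_apply, Finsupp.sum, smul_eq_mul, mul_comm (w _), Polynomial.C_mul,
        mul_assoc]
      rfl
    rw [hm, Polynomial.coeff_C_mul_X_pow]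
    split_ifs with h
    · rw [h, (isWeightedHomogeneous_monomial w m a rfl).weightedHomogeneousComponent_same]
    · rw [(isWeightedHomogeneous_monomial w m a rfl).weightedHomogeneousComponent_ne _ h,
        map_zero]
  | add p q hp hq => simp only [map_add, Polynomial.coeff_add, hp, hq]

lemma exists_eval_eq_zero_of_support_nontrivial [Finite σ] [IsAlgClosed k]
    {p : MvPolynomial σ k} (hp : p.support.Nontrivial) :
    ∃ z : σ → k, (∀ i, z i ≠ 0) ∧ eval z p = 0 := by
  cases nonempty_fintype σ
  obtain ⟨m, hm, m', hm', hne⟩ := hp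
  obtain ⟨i, hi⟩ := Finsupp.ne_iff.1 hne
  let w : σ → ℕ := Pi.single i 1
  have hw (m : σ →₀ ℕ) : Finsupp.weight w m = m i := by
    simp [w, Finsupp.weight_apply, Finsupp.sum_fintype, Pi.single_apply]
  have hcomp {m : σ →₀ ℕ} (hm : m ∈ p.support) :
      weightedHomogeneousComponent w (m i) p ≠ 0 := fun h => mem_support_iff.1 hm <| by
    rw [← coeff_zero m, ← h, coeff_weightedHomogeneousComponent, if_pos (hw m)]
  obtain ⟨c, hc⟩ : ∃ c : σ → k, eval c ((∏ j, X j) * (weightedHomogeneousComponent w (m i) p *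
      weightedHomogeneousComponent w (m' i) p)) ≠ 0 := by
    by_contra! h
    exact mul_ne_zero (Finset.prod_ne_zero_iff.2 fun j _ => X_ne_zero j)
      (mul_ne_zero (hcomp hm) (hcomp hm')) (MvPolynomial.funext fun c => by rw [h c, map_zero])
  simp only [map_mul, map_prod, eval_X, mul_ne_zero_iff, Finset.prod_ne_zero_iff] at hc
  obtain ⟨t, ht, hroot⟩ := exists_ne_zero_isRoot
    (p := aeval (fun j => Polynomial.C (c j) * Polynomial.X ^ w j) p)
    ⟨m i, by simpa [coeff_aeval_C_mul_X_pow] using hc.2.1,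
      m' i, by simpa [coeff_aeval_C_mul_X_pow] using hc.2.2, hi⟩
  refine ⟨fun j => c j * t ^ w j,
    fun j => mul_ne_zero (hc.1 j (Finset.mem_univ j)) (pow_ne_zero _ ht), ?_⟩
  have hcomp : eval (fun j => c j * t ^ w j) p =
      (aeval (fun j => Polynomial.C (c j) * Polynomial.X ^ w j) p).eval t := by
    rw [← Polynomial.coe_aeval_eq_eval, comp_aeval_apply]
    simp [aeval_eq_eval]
  rw [hcomp, hroot]

lemma exists_prime_mul_of_eval_pderiv_ne_zero {p : MvPolynomial σ k} {z : σ → k}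
    (hz : eval z p = 0) {i : σ} (hi : eval z (pderiv i p) ≠ 0) :
    ∃ q b, p = q * b ∧ Prime q ∧ ¬ q ∣ b := by
  have hp : p ≠ 0 := fun h => hi (by rw [h, map_zero, map_zero])
  obtain ⟨s, hs, u, hu⟩ := UniqueFactorizationMonoid.exists_prime_factors p hp
  have hprod : eval z s.prod = 0 := by
    have hunit : IsUnit (eval z (u : MvPolynomial σ k)) := u.isUnit.map _
    rwa [← hu, map_mul, hunit.mul_left_eq_zero] at hz
  rw [map_multiset_prod, Multiset.prod_eq_zero_iff, Multiset.mem_map] at hprod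
  obtain ⟨q, hqs, hq⟩ := hprod
  obtain ⟨b, rfl⟩ : q ∣ p := (Multiset.dvd_prod hqs).trans ⟨u, hu.symm⟩
  refine ⟨q, b, rfl, hs q hqs, ?_⟩
  rintro ⟨c, rfl⟩
  simp [Derivation.leibniz, hq] at hi

end TorusZeros

section NewtonPolyhedron

open MvPolynomial

variable {n : ℕ}

lemma dotR_natCast (u : Fin n → ℝ) (m : Fin n →₀ ℕ) :
    dotR u (fun i => (m i : ℝ)) = Finsupp.weight u m := by
  simp [dotR, Finsupp.weight_apply, Finsupp.sum_fintype, mul_comm]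

lemma dotR_neg_left (u v : Fin n → ℝ) : dotR (-u) v = -dotR u v :=
  neg_dotProduct u v

lemma natCast_mem_NPinf {f : MvPolynomial (Fin n) ℂ} {m : Fin n →₀ ℕ} (hm : m ∈ f.support) :
    (fun i => (m i : ℝ)) ∈ NPinf f :=
  subset_convexHull ℝ _ (Or.inr ⟨m, mem_support_iff.1 hm, rfl⟩)

lemma NPinf_subset_of_convex {f : MvPolynomial (Fin n) ℂ} {s : Set (Fin n → ℝ)}
    (hs : Convex ℝ s) (h₀ : 0 ∈ s) (h : ∀ m ∈ f.support, (fun i => (m i : ℝ)) ∈ s) :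
    NPinf f ⊆ s := by
  refine convexHull_min ?_ hs
  rintro _ (rfl | ⟨m, hm, rfl⟩)
  exacts [h₀, h m (mem_support_iff.2 hm)]

lemma dotR_le_of_mem_NPinf {f : MvPolynomial (Fin n) ℂ} {u : Fin n → ℝ} {d : ℝ} (hd : 0 ≤ d)
    (hle : ∀ m ∈ f.support, Finsupp.weight u m ≤ d) {x : Fin n → ℝ} (hx : x ∈ NPinf f) :
    dotR u x ≤ d := by
  refine NPinf_subset_of_convex (s := {x | dotR u x ≤ d})
    (convex_halfSpace_le ⟨dotProduct_add u, fun c x => dotProduct_smul c u x⟩ d) ?_ ?_ hx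
  · simpa [dotR] using hd
  · intro m hm
    simpa only [Set.mem_ofPred_eq, dotR_natCast] using hle m hm

lemma mem_suppFace_neg_iff {f : MvPolynomial (Fin n) ℂ} {u : Fin n → ℝ} {d : ℝ} (hd : 0 ≤ d)
    (hle : ∀ m ∈ f.support, Finsupp.weight u m ≤ d)
    (hex : ∃ m ∈ f.support, Finsupp.weight u m = d) {x : Fin n → ℝ} :
    x ∈ suppFace f (-u) ↔ x ∈ NPinf f ∧ dotR u x = d := by
  refine and_congr_right fun hx => ?_
  simp only [dotR_neg_left, neg_le_neg_iff]
  constructor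
  · intro h
    obtain ⟨m, hm, rfl⟩ := hex
    exact (dotR_le_of_mem_NPinf hd hle hx).antisymm (dotR_natCast u m ▸ h _ (natCast_mem_NPinf hm))
  · rintro rfl y hy
    exact dotR_le_of_mem_NPinf hd hle hy

lemma facePart_suppFace_neg {f : MvPolynomial (Fin n) ℂ} {u : Fin n → ℝ} {d : ℝ} (hd : 0 ≤ d)
    (hle : ∀ m ∈ f.support, Finsupp.weight u m ≤ d)
    (hex : ∃ m ∈ f.support, Finsupp.weight u m = d) :
    facePart f (suppFace f (-u)) = weightedHomogeneousComponent u d f := by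
  rw [facePart, weightedHomogeneousComponent_apply, Finset.sum_filter]
  refine Finset.sum_congr rfl fun m hm => if_congr ?_ rfl rfl
  rw [mem_suppFace_neg_iff hd hle hex, dotR_natCast, and_iff_right (natCast_mem_NPinf hm)]

lemma exists_eval_pderiv_weightedHomogeneousComponent_ne_zero {f : MvPolynomial (Fin n) ℂ}
    (hnd : NondegAtInfty f) {u : Fin n → ℝ} {d : ℝ} (hd : 0 < d)
    (hle : ∀ m ∈ f.support, Finsupp.weight u m ≤ d)
    (hex : ∃ m ∈ f.support, Finsupp.weight u m = d) {z : Fin n → ℂ} (hz : ∀ i, z i ≠ 0)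
    (hfz : eval z (weightedHomogeneousComponent u d f) = 0) :
    ∃ i, eval z (pderiv i (weightedHomogeneousComponent u d f)) ≠ 0 := by
  rw [← facePart_suppFace_neg hd.le hle hex] at hfz ⊢
  refine hnd _ ⟨-u, rfl⟩ (fun h => hd.ne ?_) z hz hfz
  simpa [dotR] using ((mem_suppFace_neg_iff hd.le hle hex).1 h).2

lemma exists_natCast_notMem_span_singleton {f : MvPolynomial (Fin n) ℂ}
    (hdim : 2 ≤ setDim (NPinf f)) (v : Fin n → ℝ) :
    ∃ m ∈ f.support, (fun i => (m i : ℝ)) ∉ Submodule.span ℝ {v} := by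
  by_contra! h
  have hsub : NPinf f ⊆ (Submodule.span ℝ {v}).toAffineSubspace :=
    NPinf_subset_of_convex (Submodule.convex _) (Submodule.zero_mem _) h
  have hle := Submodule.finrank_mono (AffineSubspace.direction_le (affineSpan_le.2 hsub))
  rw [Submodule.toAffineSubspace_direction] at hle
  have hone := (finrank_span_le_card (R := ℝ) {v}).trans_eq (Set.toFinset_card {v})
  rw [Set.card_singleton] at hone
  exact absurd (hdim.trans (hle.trans hone)) (by norm_num)

lemma exists_mem_support_apply_ne_zero {f : MvPolynomial (Fin n) ℂ}
    (hdim : 2 ≤ setDim (NPinf f)) : ∃ m ∈ f.support, ∃ i, m i ≠ 0 := by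
  obtain ⟨m, hm, hm₀⟩ := exists_natCast_notMem_span_singleton hdim 0
  refine ⟨m, hm, ?_⟩
  by_contra! h
  exact hm₀ (by simp [h, ← Pi.zero_def])

/-- A supporting half-space `a ≤ M` is rotated in the direction `b` until it hits a new point. -/
lemma exists_rotation {ι K : Type*} [Field K] [LinearOrder K] [IsStrictOrderedRing K]
    {s : Finset ι} {a b : ι → K} {M : K} (ha : ∀ i ∈ s, a i ≤ M) (hb : ∃ i ∈ s, 0 < b i) :
    ∃ t : K, (∃ i ∈ s, 0 < b i ∧ a i + t * b i = M) ∧ ∀ i ∈ s, a i + t * b i ≤ M := by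
  obtain ⟨j, hj, hjb⟩ := hb
  obtain ⟨i, hi, hmin⟩ := Finset.exists_min_image {i ∈ s | 0 < b i} (fun i => (M - a i) / b i)
    ⟨j, Finset.mem_filter.2 ⟨hj, hjb⟩⟩
  obtain ⟨his, hib⟩ := Finset.mem_filter.1 hi
  refine ⟨(M - a i) / b i, ⟨i, his, hib, ?_⟩, fun j hj => ?_⟩
  · rw [div_mul_cancel₀ _ hib.ne', add_sub_cancel]
  · rcases lt_or_ge 0 (b j) with hjb | hjb
    · have := (le_div_iff₀ hjb).1 (hmin j (Finset.mem_filter.2 ⟨hj, hjb⟩))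
      linarith
    · have := mul_nonpos_of_nonneg_of_nonpos
        (div_nonneg (sub_nonneg.2 (ha i his)) hib.le) hjb
      linarith [ha j hj]

lemma exists_weight_eq_zero_and_pos {f : MvPolynomial (Fin n) ℂ}
    (hdim : 2 ≤ setDim (NPinf f)) (v : Fin n →₀ ℕ) :
    ∃ w : Fin n → ℝ, Finsupp.weight w v = 0 ∧ ∃ m ∈ f.support, 0 < Finsupp.weight w m := by
  obtain ⟨m, hm, hmv⟩ := exists_natCast_notMem_span_singleton hdim fun i => (v i : ℝ)
  obtain ⟨φ, hφm, hφv⟩ := Submodule.exists_dual_map_eq_bot_of_notMem hmv inferInstance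
  let ψ := φ (fun i => (m i : ℝ)) • φ
  have hψ (m' : Fin n →₀ ℕ) :
      Finsupp.weight (fun i => ψ (Pi.single i 1)) m' = ψ fun i => (m' i : ℝ) := by
    rw [Finsupp.weight_eq_sum, LinearMap.pi_apply_eq_sum_univ ψ]
    refine Finset.sum_congr rfl fun i _ => ?_
    rw [nsmul_eq_mul, smul_eq_mul]
    congr 2 with j
    simp [Pi.single_apply, eq_comm]
  refine ⟨_, (hψ v).trans ?_, m, hm, (hψ m).symm ▸ mul_self_pos.2 hφm⟩
  rw [Submodule.map_span, Set.image_singleton, Submodule.span_singleton_eq_bot] at hφv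
  exact mul_eq_zero_of_right _ hφv

/-- The direction `u` is the outer normal of a face of the Newton polyhedron which has positive dimension
and does not contain `0`. -/
lemma exists_weightedHomogeneousComponent_support_nontrivial {f : MvPolynomial (Fin n) ℂ}
    (hdim : 2 ≤ setDim (NPinf f)) :
    ∃ u : Fin n → ℝ, ∃ d : ℝ, 0 < d ∧ (∀ m ∈ f.support, Finsupp.weight u m ≤ d) ∧
      (weightedHomogeneousComponent u d f).support.Nontrivial := by
  obtain ⟨m₀, hm₀, i, hi⟩ := exists_mem_support_apply_ne_zero hdim
  obtain ⟨v, hv, hvmax⟩ := Finset.exists_max_image f.support (Finsupp.weight (1 : Fin n → ℝ))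
    ⟨m₀, hm₀⟩
  obtain ⟨w, hwv, hw⟩ := exists_weight_eq_zero_and_pos hdim v
  obtain ⟨t, ⟨m, hm, hwm, hmd⟩, hle⟩ := exists_rotation hvmax hw
  have hweight (m : Fin n →₀ ℕ) : Finsupp.weight (1 + t • w) m =
      Finsupp.weight (1 : Fin n → ℝ) m + t * Finsupp.weight w m := by
    simp only [← dotR_natCast]
    exact (add_dotProduct _ _ _).trans (congrArg _ (smul_dotProduct t w _))
  have hvd : Finsupp.weight (1 + t • w) v = Finsupp.weight (1 : Fin n → ℝ) v := by
    rw [hweight, hwv, mul_zero, add_zero]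
  refine ⟨1 + t • w, Finsupp.weight (1 : Fin n → ℝ) v, lt_of_lt_of_le ?_ (hvmax m₀ hm₀),
    fun m hm => hweight m ▸ hle m hm, v, ?_, m, ?_, ?_⟩
  · exact one_pos.trans_le (Finsupp.le_weight_of_ne_zero (fun _ => zero_le_one) hi)
  · simpa [coeff_weightedHomogeneousComponent, hvd] using hv
  · simpa [coeff_weightedHomogeneousComponent, hweight, hmd] using hm
  · rintro rfl
    exact hwm.ne' hwv

lemma exists_prime_factor_weightedHomogeneousComponent {f : MvPolynomial (Fin n) ℂ}
    (hdim : 2 ≤ setDim (NPinf f)) (hnd : NondegAtInfty f) :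
    ∃ u : Fin n → ℝ, ∃ d : ℝ, 0 < d ∧ (∀ m ∈ f.support, Finsupp.weight u m ≤ d) ∧
      ∃ q b, weightedHomogeneousComponent u d f = q * b ∧ Prime q ∧ ¬ q ∣ b := by
  obtain ⟨u, d, hd, hle, hnt⟩ := exists_weightedHomogeneousComponent_support_nontrivial hdim
  obtain ⟨z, hz, hfz⟩ := exists_eval_eq_zero_of_support_nontrivial hnt
  obtain ⟨m, hm⟩ := hnt.nonempty
  obtain ⟨hmd, hm⟩ : Finsupp.weight u m = d ∧ m ∈ f.support := by
    simpa [coeff_weightedHomogeneousComponent] using hm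
  obtain ⟨i, hi⟩ := exists_eval_pderiv_weightedHomogeneousComponent_ne_zero hnd hd hle
    ⟨m, hm, hmd⟩ hz hfz
  exact ⟨u, d, hd, hle, exists_prime_mul_of_eval_pderiv_ne_zero hfz hi⟩

lemma totalDegree_pos_of_two_le_setDim {f : MvPolynomial (Fin n) ℂ}
    (hdim : 2 ≤ setDim (NPinf f)) : 0 < f.totalDegree := by
  obtain ⟨m, hm, i, hi⟩ := exists_mem_support_apply_ne_zero hdim
  exact Nat.pos_of_ne_zero fun h => hi ((totalDegree_eq_zero_iff _ f).1 h m hm i)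

end NewtonPolyhedron

section RootsOver

open Filter Metric Polynomial Topology

/-- The roots of the member `G.map (φ x)` of the family of polynomials `x ↦ G.map (φ x)` that lie
in the slice over `x` of `u ⊆ X × ℂ`, with multiplicity. -/
def rootsOver {X R : Type*} [CommRing R] (φ : X → R →+* ℂ) (G : R[X]) (u : Set (X × ℂ)) (x : X) :
    Multiset ℂ :=
  (G.map (φ x)).roots.filter fun y => (x, y) ∈ u

/-- The open sets `u` and `v` cut the set of all `(x, y)` with `y` a root of `G.map (φ x)` into two
disjoint relatively open pieces. -/
structure SeparatesRoots {X R : Type*} [CommRing R] [TopologicalSpace X] (φ : X → R →+* ℂ)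
    (G : R[X]) (u v : Set (X × ℂ)) : Prop where
  isOpen_left : IsOpen u
  isOpen_right : IsOpen v
  mem_or_mem : ∀ x, ∀ y ∈ (G.map (φ x)).roots, (x, y) ∈ u ∨ (x, y) ∈ v
  notMem_right : ∀ x, ∀ y ∈ (G.map (φ x)).roots, (x, y) ∈ u → (x, y) ∉ v

variable {X Y R : Type*} [CommRing R] {φ : X → R →+* ℂ} {G : R[X]} {u v : Set (X × ℂ)}

lemma rootsOver_le (x : X) : rootsOver φ G u x ≤ (G.map (φ x)).roots :=
  Multiset.filter_le _ _

lemma card_rootsOver_le (hG : G.Monic) (x : X) : (rootsOver φ G u x).card ≤ G.natDegree :=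
  (Multiset.card_le_card (rootsOver_le x)).trans
    ((card_roots' _).trans (hG.natDegree_map _).le)

lemma norm_le_of_mem_roots {q : ℂ[X]} (hq : q.Monic) {y : ℂ} (hy : y ∈ q.roots) :
    ‖y‖ ≤ 1 + ∑ i ∈ Finset.range q.natDegree, ‖q.coeff i‖ := by
  have hlt := (isRoot_of_mem_roots hy).norm_lt_cauchyBound hq.ne_zero
  have hsup : (Finset.range q.natDegree).sup (‖q.coeff ·‖₊) ≤
      ∑ i ∈ Finset.range q.natDegree, ‖q.coeff i‖₊ :=
    Finset.sup_le fun i hi => Finset.single_le_sum (f := (‖q.coeff ·‖₊)) (fun _ _ => zero_le) hi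
  have hle : q.cauchyBound ≤ 1 + ∑ i ∈ Finset.range q.natDegree, ‖q.coeff i‖₊ := by
    rw [cauchyBound, hq.leadingCoeff, nnnorm_one, div_one, add_comm]
    gcongr
  simpa using NNReal.coe_le_coe.2 (hlt.le.trans hle)

lemma norm_le_of_mem_roots_map (hG : G.Monic) {x : X} {y : ℂ} (hy : y ∈ (G.map (φ x)).roots) :
    ‖y‖ ≤ 1 + ∑ i ∈ Finset.range G.natDegree, ‖φ x (G.coeff i)‖ := by
  simpa only [hG.natDegree_map, coeff_map] using norm_le_of_mem_roots (hG.map (φ x)) hy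

variable [TopologicalSpace X] [TopologicalSpace Y]

namespace SeparatesRoots

lemma symm (h : SeparatesRoots φ G u v) : SeparatesRoots φ G v u where
  isOpen_left := h.isOpen_right
  isOpen_right := h.isOpen_left
  mem_or_mem x y hy := (h.mem_or_mem x y hy).symm
  notMem_right x y hy hv hu := h.notMem_right x y hy hu hv

lemma comp (h : SeparatesRoots φ G u v) {γ : Y → X} (hγ : Continuous γ) :
    SeparatesRoots (φ ∘ γ) G (Prod.map γ id ⁻¹' u) (Prod.map γ id ⁻¹' v) where
  isOpen_left := h.isOpen_left.preimage (hγ.prodMap continuous_id)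
  isOpen_right := h.isOpen_right.preimage (hγ.prodMap continuous_id)
  mem_or_mem y := h.mem_or_mem (γ y)
  notMem_right y := h.notMem_right (γ y)

lemma rootsOver_add_rootsOver (h : SeparatesRoots φ G u v) (x : X) :
    rootsOver φ G u x + rootsOver φ G v x = (G.map (φ x)).roots := by
  have hv : rootsOver φ G v x = (G.map (φ x)).roots.filter fun y => (x, y) ∉ u :=
    Multiset.filter_congr fun y hy =>
      ⟨fun hv hu => h.notMem_right x y hy hu hv, (h.mem_or_mem x y hy).resolve_left⟩
  rw [hv, rootsOver, Multiset.filter_add_not]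

end SeparatesRoots

lemma continuous_eval_map (hφ : ∀ a, Continuous fun x => φ x a) :
    Continuous fun p : X × ℂ => (G.map (φ p.1)).eval p.2 := by
  simp only [eval_map, eval₂_eq_sum_range]
  exact continuous_finsetSum _ fun i _ =>
    ((hφ _).comp continuous_fst).mul (continuous_snd.pow i)

lemma eventually_forall_mem_roots_map (hφ : ∀ a, Continuous fun x => φ x a) (hG : G.Monic) {x₀ : X}
    {U : Set (X × ℂ)} (hU : IsOpen U) (h : ∀ y ∈ (G.map (φ x₀)).roots, (x₀, y) ∈ U) :
    ∀ᶠ x in 𝓝 x₀, ∀ y ∈ (G.map (φ x)).roots, (x, y) ∈ U := by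
  have hroot (x : X) (y : ℂ) : y ∈ (G.map (φ x)).roots ↔ (G.map (φ x)).eval y = 0 :=
    mem_roots (hG.map _).ne_zero
  let B (x : X) : ℝ := 1 + ∑ i ∈ Finset.range G.natDegree, ‖φ x (G.coeff i)‖
  have hB : Continuous B := by fun_prop
  have hcompact : ∀ᶠ x in 𝓝 x₀, ∀ y ∈ closedBall 0 (B x₀ + 1),
      (x, y) ∈ U ∨ (G.map (φ x)).eval y ≠ 0 := by
    refine (isCompact_closedBall _ _).eventually_forall_of_forall_eventually fun y _ => ?_
    have hopen : IsOpen (U ∪ {p : X × ℂ | (G.map (φ p.1)).eval p.2 ≠ 0}) :=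
      hU.union (isOpen_ne_fun (continuous_eval_map hφ) continuous_const)
    refine hopen.mem_nhds ?_
    by_cases hy : (G.map (φ x₀)).eval y = 0
    exacts [Or.inl (h y ((hroot x₀ y).2 hy)), Or.inr hy]
  have hbound : ∀ᶠ x in 𝓝 x₀, B x < B x₀ + 1 :=
    hB.continuousAt.eventually_lt continuousAt_const (lt_add_one _)
  filter_upwards [hcompact, hbound] with x hx hBx y hy
  have hyB : ‖y‖ ≤ B x := norm_le_of_mem_roots_map hG hy
  exact (hx y (mem_closedBall_zero_iff.2 (hyB.trans hBx.le))).resolve_right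
    (not_not.2 ((hroot x y).1 hy))

lemma exists_pos_forall_two_mul_lt_dist {α : Type*} [MetricSpace α] (s : Finset α) :
    ∃ r > 0, ∀ a ∈ s, ∀ b ∈ s, a ≠ b → 2 * r < dist a b := by
  have hev : ∀ᶠ r : ℝ in 𝓝[>] 0, ∀ a ∈ s, ∀ b ∈ s, a ≠ b → 2 * r < dist a b := by
    simp only [Finset.eventually_all, eventually_imp_distrib_left]
    intro a _ b _ hab
    have hlim : Tendsto (fun r : ℝ => 2 * r) (𝓝[>] 0) (𝓝 0) :=
      tendsto_nhdsWithin_of_tendsto_nhds (by simpa using (continuous_const_mul (2 : ℝ)).tendsto 0)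
    exact hlim.eventually_lt_const (dist_pos.2 hab)
  exact (hev.and self_mem_nhdsWithin).exists.imp fun r hr => ⟨hr.2, hr.1⟩

lemma filter_eq_sum_filter_mem_ball {T : Finset ℂ} {r : ℝ} (m : Multiset ℂ) {P : ℂ → Prop}
    (hsep : ∀ a ∈ T, ∀ b ∈ T, a ≠ b → 2 * r < dist a b)
    (hP : ∀ y ∈ m, P y ↔ ∃ c ∈ T, y ∈ ball c r) :
    m.filter P = ∑ c ∈ T, m.filter (· ∈ ball c r) := by
  ext y
  rw [Multiset.count_sum', Multiset.count_filter]
  simp only [Multiset.count_filter]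
  by_cases hy : y ∈ m
  · by_cases hyT : ∃ c ∈ T, y ∈ ball c r
    · rw [if_pos ((hP y hy).2 hyT)]
      obtain ⟨c, hc, hyc⟩ := hyT
      rw [Finset.sum_eq_single_of_mem c hc, if_pos hyc]
      intro b hb hne
      refine if_neg fun hyb => ?_
      have := hsep b hb c hc hne
      have := dist_triangle_left b c y
      rw [mem_ball] at hyc hyb
      linarith
    · rw [if_neg (mt (hP y hy).1 hyT), Finset.sum_eq_zero]
      exact fun c hc => if_neg fun hyc => hyT ⟨c, hc, hyc⟩
  · simp [Multiset.count_eq_zero.2 hy]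

lemma SeparatesRoots.eventually_rootsOver_eq_sum (h : SeparatesRoots φ G u v)
    (hφ : ∀ a, Continuous fun x => φ x a) (hG : G.Monic) (x₀ : X) :
    ∃ r > 0, ∃ T : Finset ℂ, (∀ c ∈ T, ∀ s ∈ sphere c r, (G.map (φ x₀)).eval s ≠ 0) ∧
      ∀ᶠ x in 𝓝 x₀, rootsOver φ G u x = ∑ c ∈ T, (G.map (φ x)).roots.filter (· ∈ ball c r) := by
  obtain ⟨r, hr, hsep⟩ := exists_pos_forall_two_mul_lt_dist (G.map (φ x₀)).roots.toFinset
  let T := (rootsOver φ G u x₀).toFinset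
  have hT : ∀ y ∈ T, y ∈ (G.map (φ x₀)).roots ∧ (x₀, y) ∈ u := fun y hy =>
    Multiset.mem_filter.1 (Multiset.mem_toFinset.1 hy)
  have hTsep : ∀ a ∈ (G.map (φ x₀)).roots, ∀ b ∈ T, a ≠ b → 2 * r < dist a b := fun a ha b hb =>
    hsep a (Multiset.mem_toFinset.2 ha) b (Multiset.mem_toFinset.2 (hT b hb).1)
  refine ⟨r, hr, T, fun c hc s hs hzero => ?_, ?_⟩
  · have hne : s ≠ c := ne_of_mem_sphere hs hr.ne'
    have := hTsep s ((mem_roots (hG.map _).ne_zero).2 hzero) c hc hne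
    rw [mem_sphere] at hs
    linarith
  let inside : Set (X × ℂ) := ⋃ c ∈ T, Prod.snd ⁻¹' ball c r
  let outside : Set (X × ℂ) := ⋂ c ∈ T, Prod.snd ⁻¹' (closedBall c r)ᶜ
  have hinside : IsOpen inside :=
    isOpen_biUnion fun c _ => isOpen_ball.preimage continuous_snd
  have houtside : IsOpen outside :=
    isOpen_biInter_finset fun c _ => isClosed_closedBall.isOpen_compl.preimage continuous_snd
  have hx₀ : ∀ y ∈ (G.map (φ x₀)).roots, (x₀, y) ∈ u ∩ inside ∪ v ∩ outside := by
    intro y hy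
    by_cases hyu : (x₀, y) ∈ u
    · have hyT : y ∈ T := Multiset.mem_toFinset.2 (Multiset.mem_filter.2 ⟨hy, hyu⟩)
      exact Or.inl ⟨hyu, Set.mem_biUnion hyT (mem_ball_self hr)⟩
    · refine Or.inr ⟨(h.mem_or_mem x₀ y hy).resolve_left hyu, Set.mem_iInter₂.2 fun c hc => ?_⟩
      have := hTsep y hy c hc (by rintro rfl; exact hyu (hT y hc).2)
      simp only [Set.mem_preimage, Set.mem_compl_iff, mem_closedBall]
      linarith
  have hopen := (h.isOpen_left.inter hinside).union (h.isOpen_right.inter houtside)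
  filter_upwards [eventually_forall_mem_roots_map hφ hG hopen hx₀] with x hx
  refine filter_eq_sum_filter_mem_ball _ (fun a ha => hTsep a (hT a ha).1) fun y hy => ?_
  rcases hx y hy with ⟨hyu, hyin⟩ | ⟨hyv, hyout⟩
  · exact iff_of_true hyu (by simpa [inside] using hyin)
  · refine iff_of_false (fun hyu => h.notMem_right x y hy hyu hyv) ?_
    rintro ⟨c, hc, hyc⟩
    exact Set.mem_iInter₂.1 hyout c hc (ball_subset_closedBall hyc)

end RootsOver

section RootSums

open Filter Metric Polynomial Topology

lemma differentiableAt_circleIntegral {E : Type*} [NormedAddCommGroup E] [NormedSpace ℂ E]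
    {F : ℂ × ℂ → E} {W : Set (ℂ × ℂ)} (hW : IsOpen W) (hF : ContDiffOn ℂ 1 F W) {x₀ c : ℂ} {r : ℝ}
    (hr : 0 ≤ r) (hx₀ : ∀ s ∈ sphere c r, (x₀, s) ∈ W) :
    DifferentiableAt ℂ (fun x => ∮ s in C(c, r), F (x, s)) x₀ := by
  obtain ⟨δ, hδ, hball⟩ : ∃ δ > 0, closedBall x₀ δ ×ˢ sphere c r ⊆ W := by
    obtain ⟨U, V, hU, -, hx₀U, hV, hUV⟩ := generalized_tube_lemma isCompact_singleton
      (isCompact_sphere c r) hW (by rintro ⟨x, s⟩ ⟨rfl, hs⟩; exact hx₀ s hs)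
    obtain ⟨δ, hδ, hδU⟩ := nhds_basis_closedBall.mem_iff.1 (hU.mem_nhds (hx₀U rfl))
    exact ⟨δ, hδ, (Set.prod_mono hδU hV).trans hUV⟩
  have hmem {x : ℂ} (hx : x ∈ closedBall x₀ δ) (θ : ℝ) : (x, circleMap c r θ) ∈ W :=
    hball ⟨hx, circleMap_mem_sphere c hr θ⟩
  have hcircle (x : ℂ) : Continuous fun θ => (x, circleMap c r θ) :=
    continuous_const.prodMk (continuous_circleMap c r)
  have hcircle' : Continuous (deriv (circleMap c r)) := by
    simp only [funext_iff.2 (deriv_circleMap c r)]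
    exact (continuous_circleMap 0 r).mul continuous_const
  let F₁ (p : ℂ × ℂ) : E := fderiv ℂ F p (1, 0)
  have hF₁ : ContinuousOn F₁ W :=
    (hF.continuousOn_fderiv_of_isOpen hW le_rfl).clm_apply continuousOn_const
  obtain ⟨M, hM⟩ := ((isCompact_closedBall x₀ δ).prod
    (isCompact_sphere c r)).exists_bound_of_continuousOn (hF₁.mono hball)
  have hself : x₀ ∈ closedBall x₀ δ := mem_closedBall_self hδ.le
  have hint {x : ℂ} (hx : x ∈ closedBall x₀ δ) :
      Continuous fun θ => deriv (circleMap c r) θ • F (x, circleMap c r θ) :=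
    hcircle'.smul (hF.continuousOn.comp_continuous (hcircle x) (hmem hx))
  have hderiv {x : ℂ} (hx : x ∈ closedBall x₀ δ) (θ : ℝ) :
      HasDerivAt (fun x => F (x, circleMap c r θ)) (F₁ (x, circleMap c r θ)) x :=
    ((hF.contDiffAt (hW.mem_nhds (hmem hx θ))).differentiableAt
      one_ne_zero).hasFDerivAt.comp_hasDerivAt x
        ((hasDerivAt_id x).prodMk (hasDerivAt_const x (circleMap c r θ)))
  refine (intervalIntegral.hasDerivAt_integral_of_dominated_loc_of_deriv_le
    (F' := fun x θ => deriv (circleMap c r) θ • F₁ (x, circleMap c r θ)) (bound := fun _ => r * M)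
    (closedBall_mem_nhds x₀ hδ) ?_ ((hint hself).intervalIntegrable _ _) ?_ ?_
    intervalIntegrable_const ?_).2.differentiableAt
  · filter_upwards [closedBall_mem_nhds x₀ hδ] with x hx using (hint hx).aestronglyMeasurable
  · exact (hcircle'.smul
      (hF₁.comp_continuous (hcircle x₀) (hmem hself))).aestronglyMeasurable
  · refine Eventually.of_forall fun θ _ x hx => ?_
    rw [norm_smul, deriv_circleMap, norm_mul, norm_circleMap_zero, Complex.norm_I, mul_one,
      abs_of_nonneg hr]
    gcongr
    exact hM _ ⟨hx, circleMap_mem_sphere c hr θ⟩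
  · exact Eventually.of_forall fun θ _ x hx => (hderiv hx θ).const_smul _

variable {f : ℂ → ℂ} {c : ℂ} {r : ℝ}

lemma continuousOn_div_sub_sphere (hf : Differentiable ℂ f) {y : ℂ} (hy : y ∉ sphere c r) :
    ContinuousOn (fun s => f s / (s - y)) (sphere c r) :=
  hf.continuous.continuousOn.div (by fun_prop) fun _ hs =>
    sub_ne_zero.2 fun h => hy (h ▸ hs)

lemma circleIntegral_div_sub (hf : Differentiable ℂ f) (hr : 0 ≤ r) {y : ℂ}
    (hy : y ∉ sphere c r) :
    (∮ s in C(c, r), f s / (s - y)) =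
      2 * Real.pi * Complex.I * if y ∈ ball c r then f y else 0 := by
  split_ifs with hyc
  · simpa only [smul_eq_mul, div_eq_inv_mul] using
      hf.diffContOnCl.circleIntegral_sub_inv_smul hyc
  · have hne : ∀ s ∈ closedBall c r, s - y ≠ 0 := by
      rintro s hs h
      obtain rfl := sub_eq_zero.1 h
      rw [← ball_union_sphere] at hs
      exact hs.elim hyc hy
    rw [mul_zero]
    exact Complex.circleIntegral_eq_zero_of_differentiable_on_off_countable hr Set.countable_empty
      (hf.continuous.continuousOn.div (by fun_prop) hne) fun s hs =>
        hf.differentiableAt.div (by fun_prop) (hne s (ball_subset_closedBall hs.1))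

lemma circleIntegral_mul_multiset_sum (hf : Differentiable ℂ f) (hr : 0 ≤ r) {m : Multiset ℂ}
    (hm : ∀ y ∈ m, y ∉ sphere c r) :
    CircleIntegrable (fun s => f s * (m.map fun y => 1 / (s - y)).sum) c r ∧
      (∮ s in C(c, r), f s * (m.map fun y => 1 / (s - y)).sum) =
        2 * Real.pi * Complex.I * ((m.filter (· ∈ ball c r)).map f).sum := by
  induction m using Multiset.induction_on with
  | empty => simp [CircleIntegrable, circleIntegral]
  | cons a m ih =>
    obtain ⟨hint, heq⟩ := ih fun y hy => hm y (Multiset.mem_cons_of_mem hy)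
    have ha := hm a (Multiset.mem_cons_self a m)
    have hinta := (continuousOn_div_sub_sphere hf ha).circleIntegrable hr
    simp only [Multiset.map_cons, Multiset.sum_cons, mul_add, mul_one_div]
    refine ⟨hinta.add hint, ?_⟩
    rw [circleIntegral.integral_add hinta hint, heq, circleIntegral_div_sub hf hr ha,
      Multiset.filter_cons]
    split_ifs <;> simp [mul_add]

lemma circleIntegral_mul_logDeriv (hf : Differentiable ℂ f) (hr : 0 ≤ r) {q : ℂ[X]}
    (hq : ∀ s ∈ sphere c r, q.eval s ≠ 0) :
    (∮ s in C(c, r), f s * (q.derivative.eval s / q.eval s)) =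
      2 * Real.pi * Complex.I * ((q.roots.filter (· ∈ ball c r)).map f).sum := by
  rw [← (circleIntegral_mul_multiset_sum hf hr fun y hy hyc =>
    hq y hyc (isRoot_of_mem_roots hy)).2]
  refine circleIntegral.integral_congr hr fun s hs => ?_
  rw [(IsAlgClosed.splits q).eval_derivative_div_eval_of_ne_zero (hq s hs)]

variable {R : Type*} [CommRing R] {φ : ℂ → R →+* ℂ} {G : R[X]} {u v : Set (ℂ × ℂ)}

lemma contDiff_eval_map {m : WithTop ℕ∞} (hφ : ∀ a, Differentiable ℂ fun x => φ x a) (G : R[X]) :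
    ContDiff ℂ m fun p : ℂ × ℂ => (G.map (φ p.1)).eval p.2 := by
  simp only [eval_map, eval₂_eq_sum_range]
  exact ContDiff.sum fun i _ => ((hφ _).contDiff.comp contDiff_fst).mul (contDiff_snd.pow i)

lemma SeparatesRoots.differentiable_sum_map_rootsOver (h : SeparatesRoots φ G u v)
    (hφ : ∀ a, Differentiable ℂ fun x => φ x a) (hG : G.Monic) (hf : Differentiable ℂ f) :
    Differentiable ℂ fun x => ((rootsOver φ G u x).map f).sum := by
  intro x₀
  obtain ⟨r, hr, T, hT, hroots⟩ :=
    h.eventually_rootsOver_eq_sum (fun a => (hφ a).continuous) hG x₀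
  let W : Set (ℂ × ℂ) := {p | (G.map (φ p.1)).eval p.2 ≠ 0}
  have hev : ContDiff ℂ 1 fun p : ℂ × ℂ => (G.map (φ p.1)).eval p.2 := contDiff_eval_map hφ G
  have hW : IsOpen W := isOpen_ne_fun hev.continuous continuous_const
  let F (p : ℂ × ℂ) : ℂ := f p.2 * ((G.derivative.map (φ p.1)).eval p.2 / (G.map (φ p.1)).eval p.2)
  have hF : ContDiffOn ℂ 1 F W := (hf.contDiff.comp contDiff_snd).contDiffOn.mul
    ((contDiff_eval_map hφ _).contDiffOn.div hev.contDiffOn fun _ hp => hp)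
  have hdiff : DifferentiableAt ℂ
      (fun x => (2 * Real.pi * Complex.I)⁻¹ * ∑ c ∈ T, ∮ s in C(c, r), F (x, s)) x₀ :=
    .const_mul (.fun_sum fun c hc => differentiableAt_circleIntegral hW hF hr.le (hT c hc)) _
  have hsphere : ∀ᶠ x in 𝓝 x₀, ∀ c ∈ T, ∀ s ∈ sphere c r, (G.map (φ x)).eval s ≠ 0 :=
    (Finset.eventually_all T).2 fun c hc =>
      (isCompact_sphere c r).eventually_forall_of_forall_eventually fun s hs =>
        hW.mem_nhds (hT c hc s hs)
  refine hdiff.congr_of_eventuallyEq ?_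
  filter_upwards [hroots, hsphere] with x hx hne
  have hcircle : ∀ c ∈ T, (∮ s in C(c, r), F (x, s)) = 2 * Real.pi * Complex.I *
      (((G.map (φ x)).roots.filter (· ∈ ball c r)).map f).sum := fun c hc => by
    rw [← circleIntegral_mul_logDeriv hf hr.le (hne c hc), derivative_map]
  rw [hx, Finset.sum_congr rfl hcircle, ← Finset.mul_sum,
    inv_mul_cancel_left₀ Complex.two_pi_I_ne_zero]
  exact map_sum (Multiset.sumAddMonoidHom.comp (Multiset.mapAddMonoidHom f)) _ _

end RootSums

section PolynomialGrowth

open Filter Metric Polynomial Topology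

lemma iteratedDeriv_zero_eq_zero_of_norm_le {f : ℂ → ℂ} (hf : Differentiable ℂ f) {C : ℝ} {N n : ℕ}
    (hC : ∀ z, ‖f z‖ ≤ C * (1 + ‖z‖) ^ N) (hn : N < n) : iteratedDeriv n f 0 = 0 := by
  have hC0 : 0 ≤ C := by simpa using (norm_nonneg _).trans (hC 0)
  have hcauchy : ∀ r : ℝ, 1 ≤ r → ‖iteratedDeriv n f 0‖ ≤ n.factorial * (C * 2 ^ N) / r := by
    intro r hr
    have hr0 : 0 < r := one_pos.trans_le hr
    have hsphere : ∀ z ∈ sphere (0 : ℂ) r, ‖f z‖ ≤ C * (2 * r) ^ N := fun z hz => by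
      refine (hC z).trans ?_
      rw [mem_sphere_zero_iff_norm.1 hz]
      gcongr
      linarith
    calc ‖iteratedDeriv n f 0‖
        ≤ n.factorial * (C * (2 * r) ^ N) / r ^ n :=
          Complex.norm_iteratedDeriv_le_of_forall_mem_sphere_norm_le n hr0 hf.diffContOnCl hsphere
      _ = n.factorial * (C * 2 ^ N) * (r ^ N / r ^ n) := by ring
      _ ≤ n.factorial * (C * 2 ^ N) * (r ^ N / r ^ (N + 1)) := by gcongr; exact hn
      _ = n.factorial * (C * 2 ^ N) / r := by field_simp; ring
  have hlim : Tendsto (fun r : ℝ => n.factorial * (C * 2 ^ N) / r) atTop (𝓝 0) :=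
    tendsto_const_nhds.div_atTop tendsto_id
  exact norm_le_zero_iff.1 (ge_of_tendsto hlim ((eventually_ge_atTop 1).mono hcauchy))

lemma exists_polynomial_eq_eval_of_norm_le {f : ℂ → ℂ} (hf : Differentiable ℂ f) {C : ℝ} {N : ℕ}
    (hC : ∀ z, ‖f z‖ ≤ C * (1 + ‖z‖) ^ N) :
    ∃ q : ℂ[X], q.degree < ↑(N + 1) ∧ ∀ z, f z = q.eval z := by
  let a (k : ℕ) : ℂ := (k.factorial : ℂ)⁻¹ * iteratedDeriv k f 0
  refine ⟨∑ k : Fin (N + 1), Polynomial.C (a k) * X ^ (k : ℕ), degree_sum_fin_lt _, fun z => ?_⟩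
  rw [← Complex.taylorSeries_eq_of_entire' 0 z hf, tsum_eq_sum (s := Finset.range (N + 1)),
    Finset.sum_range]
  · simp [eval_finsetSum, a]
  · intro k hk
    rw [iteratedDeriv_zero_eq_zero_of_norm_le hf hC (by simpa [Nat.lt_succ_iff] using hk)]
    ring

lemma norm_eval_le {𝕜 σ : Type*} [NormedField 𝕜] [Fintype σ] (a : MvPolynomial σ 𝕜) (x : σ → 𝕜) :
    ‖MvPolynomial.eval x a‖ ≤ (∑ d ∈ a.support, ‖a.coeff d‖) * (1 + ‖x‖) ^ a.totalDegree := by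
  rw [MvPolynomial.eval_eq', Finset.sum_mul]
  refine (norm_sum_le _ _).trans (Finset.sum_le_sum fun d hd => ?_)
  rw [norm_mul, norm_prod]
  gcongr
  calc ∏ i, ‖x i ^ d i‖ ≤ ∏ i, (1 + ‖x‖) ^ d i := by
        gcongr with i
        rw [norm_pow]
        gcongr
        linarith [norm_le_pi_norm x i]
    _ = (1 + ‖x‖) ^ d.degree := by rw [Finset.prod_pow_eq_pow_sum, Finsupp.degree_eq_sum]
    _ ≤ (1 + ‖x‖) ^ a.totalDegree := by
        gcongr
        · linarith [norm_nonneg x]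
        · exact MvPolynomial.le_totalDegree hd

end PolynomialGrowth

section PolynomialFunctions

open Polynomial

/-- The functions `kⁿ → k` given by polynomials. -/
def mvPolynomialFunctions (σ k : Type*) [Field k] : Subalgebra k ((σ → k) → k) :=
  (AlgHom.pi fun x : σ → k => MvPolynomial.aeval (R := k) x).range

variable {σ k : Type*} [Field k]

lemma mem_mvPolynomialFunctions {F : (σ → k) → k} :
    F ∈ mvPolynomialFunctions σ k ↔ ∃ p : MvPolynomial σ k, ∀ x, MvPolynomial.eval x p = F x := by
  simp [mvPolynomialFunctions, AlgHom.mem_range, funext_iff, MvPolynomial.aeval_eq_eval]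

lemma mem_mvPolynomialFunctions_of_forall_update [Infinite k] {n N : ℕ} {F : (Fin n → k) → k}
    (hF : ∀ x i, ∃ q : k[X], q.degree < N ∧ ∀ t, F (Function.update x i t) = q.eval t) :
    F ∈ mvPolynomialFunctions (Fin n) k := by
  induction n with
  | zero => exact mem_mvPolynomialFunctions.2 ⟨.C (F 0), fun x => by simp [Subsingleton.elim x 0]⟩
  | succ n ih =>
    let node (i : ℕ) : k := Infinite.natEmbedding k i
    have hslice : ∀ i, (fun y => F (Fin.cons (node i) y)) ∈ mvPolynomialFunctions (Fin n) k :=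
      fun i => ih fun y j => by simpa using hF (Fin.cons (node i) y) j.succ
    choose p hp using fun i => mem_mvPolynomialFunctions.1 (hslice i)
    refine mem_mvPolynomialFunctions.2 ⟨∑ i ∈ Finset.range N, MvPolynomial.rename Fin.succ (p i) *
      aeval (MvPolynomial.X 0) (Lagrange.basis (Finset.range N) node i), fun x => ?_⟩
    obtain ⟨q, hqdeg, hq⟩ := hF x 0
    have hcons (t : k) : Function.update x 0 t = Fin.cons t (Fin.tail x) := by
      rw [← Fin.cons_self_tail x, Fin.update_cons_zero, Fin.tail_cons]
    have hinterp : q = Lagrange.interpolate (Finset.range N) node fun i => q.eval (node i) :=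
      Lagrange.eq_interpolate (Infinite.natEmbedding k).injective.injOn (by simpa using hqdeg)
    have heval (L : k[X]) : MvPolynomial.eval x (aeval (MvPolynomial.X 0) L) = L.eval (x 0) := by
      simpa using (aeval_algHom_apply (MvPolynomial.aeval x) (MvPolynomial.X 0) L).symm
    calc MvPolynomial.eval x _
        = ∑ i ∈ Finset.range N, F (Fin.cons (node i) (Fin.tail x)) *
            (Lagrange.basis (Finset.range N) node i).eval (x 0) := by
          simp only [map_sum, map_mul, MvPolynomial.eval_rename, ← hp, heval]
          rfl
      _ = q.eval (x 0) := by
          conv_rhs => rw [hinterp]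
          simp [Lagrange.interpolate_apply, eval_finsetSum, ← hq, hcons]
      _ = F x := by rw [← hq, Function.update_eq_self]

lemma multiset_mul_esymm_eq_sum {R : Type*} [CommRing R] (s : Multiset R) (j : ℕ) :
    j * s.esymm j = (-1) ^ (j + 1) * ∑ a ∈ Finset.HasAntidiagonal.antidiagonal j with a.1 < j,
      (-1) ^ a.1 * s.esymm a.1 * (s.map (· ^ a.2)).sum := by
  obtain ⟨n, f, rfl⟩ : ∃ n, ∃ f : Fin n → R, Finset.univ.val.map f = s := by
    induction s using Quotient.inductionOn with
    | h l => exact ⟨l.length, l.get, by simp⟩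
  have hpsum (i : ℕ) : MvPolynomial.aeval f (MvPolynomial.psum (Fin n) R i) =
      ((Finset.univ.val.map f).map (· ^ i)).sum := by
    rw [MvPolynomial.psum, map_sum, Multiset.map_map]
    simp [Finset.sum_eq_multiset_sum]
  have h := congrArg (MvPolynomial.aeval f) (MvPolynomial.mul_esymm_eq_sum (Fin n) R j)
  simpa only [map_mul, map_natCast, map_pow, map_neg, map_one, map_sum, hpsum,
    MvPolynomial.aeval_esymm_eq_multiset_esymm] using h

lemma esymm_mem_of_sum_pow_mem {K X : Type*} [Field K] [CharZero K] {A : Subalgebra K (X → K)}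
    {s : X → Multiset K} (h : ∀ j, (fun x => ((s x).map (· ^ j)).sum) ∈ A) (j : ℕ) :
    (fun x => (s x).esymm j) ∈ A := by
  induction j using Nat.strong_induction_on with
  | _ j ih =>
    rcases eq_or_ne j 0 with rfl | hj
    · have hone : (fun x => (s x).esymm 0) = 1 := by ext; simp [Multiset.esymm]
      exact hone ▸ A.one_mem
    have hnewton : (fun x => (s x).esymm j) = (j : K)⁻¹ • ((-1) ^ (j + 1) *
        ∑ a ∈ Finset.HasAntidiagonal.antidiagonal j with a.1 < j,
          (-1) ^ a.1 * (fun x => (s x).esymm a.1) * fun x => ((s x).map (· ^ a.2)).sum) := by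
      funext x
      rw [← inv_mul_cancel_left₀ (Nat.cast_ne_zero.2 hj : (j : K) ≠ 0) ((s x).esymm j),
        multiset_mul_esymm_eq_sum]
      simp
    have hneg : (-1 : X → K) ∈ A := A.neg_mem A.one_mem
    rw [hnewton]
    exact A.smul_mem (A.mul_mem (A.pow_mem hneg _) (A.sum_mem fun a ha => A.mul_mem
      (A.mul_mem (A.pow_mem hneg _) (ih a.1 (Finset.mem_filter.1 ha).2)) (h a.2))) _

end PolynomialFunctions

section SeparatedFactorization

open scoped Polynomial

variable {n : ℕ} {G : (MvPolynomial (Fin n) ℂ)[X]} {u v : Set ((Fin n → ℂ) × ℂ)}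

lemma exists_norm_root_le (hG : G.Monic) : ∃ C ≥ 0, ∃ N, ∀ x : Fin n → ℂ,
    ∀ y ∈ (G.map (MvPolynomial.eval x)).roots, ‖y‖ ≤ C * (1 + ‖x‖) ^ N := by
  let c (a : MvPolynomial (Fin n) ℂ) : ℝ := ∑ d ∈ a.support, ‖a.coeff d‖
  let N : ℕ := (Finset.range G.natDegree).sup fun i => (G.coeff i).totalDegree
  refine ⟨1 + ∑ i ∈ Finset.range G.natDegree, c (G.coeff i), by positivity, N, fun x y hy => ?_⟩
  have hx : 1 ≤ 1 + ‖x‖ := le_add_of_nonneg_right (norm_nonneg x)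
  refine (norm_le_of_mem_roots_map hG hy).trans ?_
  rw [add_mul, one_mul, Finset.sum_mul]
  refine add_le_add (one_le_pow₀ hx) (Finset.sum_le_sum fun i hi => (norm_eval_le _ x).trans ?_)
  gcongr
  exact Finset.le_sup (f := fun i => (G.coeff i).totalDegree) hi

lemma exists_norm_sum_pow_rootsOver_le (hG : G.Monic) (u : Set ((Fin n → ℂ) × ℂ)) (j : ℕ) :
    ∃ C ≥ 0, ∃ N, ∀ x : Fin n → ℂ,
      ‖((rootsOver MvPolynomial.eval G u x).map (· ^ j)).sum‖ ≤ C * (1 + ‖x‖) ^ N := by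
  obtain ⟨C, hC, N, hroot⟩ := exists_norm_root_le hG
  refine ⟨G.natDegree * C ^ j, by positivity, N * j, fun x => ?_⟩
  calc ‖((rootsOver MvPolynomial.eval G u x).map (· ^ j)).sum‖
      ≤ (rootsOver MvPolynomial.eval G u x).card * (C * (1 + ‖x‖) ^ N) ^ j := by
        refine (norm_multiset_sum_le _).trans ?_
        rw [Multiset.map_map, ← nsmul_eq_mul]
        refine (Multiset.sum_le_card_nsmul _ _ ?_).trans_eq (by rw [Multiset.card_map])
        simp only [Multiset.mem_map, Function.comp_apply, norm_pow]
        rintro _ ⟨y, hy, rfl⟩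
        gcongr
        exact hroot x y (Multiset.mem_of_le (rootsOver_le x) hy)
    _ ≤ G.natDegree * (C * (1 + ‖x‖) ^ N) ^ j := by
        gcongr
        exact card_rootsOver_le hG x
    _ = G.natDegree * C ^ j * (1 + ‖x‖) ^ (N * j) := by rw [mul_pow, pow_mul, mul_assoc]

lemma SeparatesRoots.sum_pow_rootsOver_mem (h : SeparatesRoots MvPolynomial.eval G u v)
    (hG : G.Monic) (j : ℕ) :
    (fun x => ((rootsOver MvPolynomial.eval G u x).map (· ^ j)).sum) ∈
      mvPolynomialFunctions (Fin n) ℂ := by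
  obtain ⟨C, hC, N, hbound⟩ := exists_norm_sum_pow_rootsOver_le hG u j
  refine mem_mvPolynomialFunctions_of_forall_update (N := N + 1) fun x i => ?_
  let line : ℂ → Fin n → ℂ := Function.update x i
  have hline : Differentiable ℂ line := fun t => (hasDerivAt_update x i t).differentiableAt
  have hcoeff (a : MvPolynomial (Fin n) ℂ) :
      Differentiable ℂ fun t => MvPolynomial.eval (line t) a :=
    (differentiableOn_univ.1 (AnalyticOnNhd.eval_mvPolynomial a).differentiableOn).comp hline
  refine exists_polynomial_eq_eval_of_norm_le (C := C * (1 + ‖x‖) ^ N)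
    ((h.comp hline.continuous).differentiable_sum_map_rootsOver hcoeff hG
      (differentiable_pow j)) fun t => (hbound (line t)).trans ?_
  have hnorm : ‖line t‖ ≤ ‖x‖ + ‖t‖ := (pi_norm_le_iff_of_nonneg (by positivity)).2 fun k => by
    rcases eq_or_ne k i with rfl | hk
    · simp [line]
    · simpa [line, hk] using le_add_of_le_of_nonneg (norm_le_pi_norm x k) (norm_nonneg t)
  rw [mul_assoc, ← mul_pow]
  gcongr
  nlinarith [norm_nonneg x, norm_nonneg t]

lemma SeparatesRoots.exists_card_rootsOver_eq (h : SeparatesRoots MvPolynomial.eval G u v)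
    (hG : G.Monic) : ∃ m, ∀ x, (rootsOver MvPolynomial.eval G u x).card = m := by
  obtain ⟨p, hp⟩ := mem_mvPolynomialFunctions.1 (h.sum_pow_rootsOver_mem hG 0)
  have hcard (x : Fin n → ℂ) :
      MvPolynomial.eval x p = (rootsOver MvPolynomial.eval G u x).card := by simp [hp]
  have hprod : ∏ i ∈ Finset.range (G.natDegree + 1), (p - MvPolynomial.C (i : ℂ)) = 0 :=
    MvPolynomial.funext fun x => by
      rw [map_prod, map_zero]
      have hx : (rootsOver MvPolynomial.eval G u x).card ≤ G.natDegree := card_rootsOver_le hG x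
      refine Finset.prod_eq_zero (Finset.mem_range.2 (Nat.lt_succ_of_le hx)) ?_
      simp [hcard]
  obtain ⟨m, -, hm⟩ := Finset.prod_eq_zero_iff.1 hprod
  refine ⟨m, fun x => ?_⟩
  have := hcard x
  rw [sub_eq_zero.1 hm, MvPolynomial.eval_C] at this
  exact_mod_cast this.symm

lemma SeparatesRoots.exists_map_eq_prod_rootsOver (h : SeparatesRoots MvPolynomial.eval G u v)
    (hG : G.Monic) : ∃ P : (MvPolynomial (Fin n) ℂ)[X], ∀ x, P.map (MvPolynomial.eval x) =
      ((rootsOver MvPolynomial.eval G u x).map fun y => Polynomial.X - Polynomial.C y).prod := by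
  obtain ⟨m, hm⟩ := h.exists_card_rootsOver_eq hG
  choose e he using fun j =>
    mem_mvPolynomialFunctions.1 (esymm_mem_of_sum_pow_mem (h.sum_pow_rootsOver_mem hG) j)
  refine ⟨∑ j ∈ Finset.range (m + 1),
    (-1) ^ j * (Polynomial.C (e j) * Polynomial.X ^ (m - j)), fun x => ?_⟩
  rw [Multiset.prod_X_sub_X_eq_sum_esymm, hm, Polynomial.map_sum]
  simp [he]

lemma eval_multiset_prod_X_sub_C_eq_zero {k : Type*} [Field k] {s : Multiset k} {y : k} :
    (s.map fun a => Polynomial.X - Polynomial.C a).prod.eval y = 0 ↔ y ∈ s := by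
  simp [Polynomial.eval_multiset_prod, Multiset.prod_eq_zero_iff, sub_eq_zero]

lemma SeparatesRoots.exists_eq_mul (h : SeparatesRoots MvPolynomial.eval G u v) (hG : G.Monic) :
    ∃ P Q : (MvPolynomial (Fin n) ℂ)[X], G = P * Q ∧
      (∀ x y, (P.map (MvPolynomial.eval x)).eval y = 0 ↔ y ∈ rootsOver MvPolynomial.eval G u x) ∧
      ∀ x y, (Q.map (MvPolynomial.eval x)).eval y = 0 ↔ y ∈ rootsOver MvPolynomial.eval G v x := by
  obtain ⟨P, hP⟩ := h.exists_map_eq_prod_rootsOver hG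
  obtain ⟨Q, hQ⟩ := h.symm.exists_map_eq_prod_rootsOver hG
  refine ⟨P, Q, ?_, fun x y => by rw [hP, eval_multiset_prod_X_sub_C_eq_zero],
    fun x y => by rw [hQ, eval_multiset_prod_X_sub_C_eq_zero]⟩
  have hmap (x : Fin n → ℂ) : G.map (MvPolynomial.eval x) = (P * Q).map (MvPolynomial.eval x) := by
    rw [Polynomial.map_mul, hP, hQ, ← Multiset.prod_add, ← Multiset.map_add,
      h.rootsOver_add_rootsOver]
    exact (IsAlgClosed.splits _).eq_prod_roots_of_monic (hG.map _)
  ext1 i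
  exact MvPolynomial.funext fun x => by
    simpa only [Polynomial.coeff_map] using congrArg (Polynomial.coeff · i) (hmap x)

end SeparatedFactorization

section LinearNormalization

open scoped Polynomial

open MvPolynomial

lemma prod_map_toMultiset {σ M : Type*} [CommMonoid M] (m : σ →₀ ℕ) (s : σ → M) :
    (m.toMultiset.map s).prod = m.prod fun i e => s i ^ e := by
  rw [Finsupp.toMultiset_map, Finsupp.prod_toMultiset, Finsupp.prod_mapDomain_index pow_zero]
  exact fun _ _ _ => pow_add _ _ _

section Degree

variable {σ k A : Type*} [CommSemiring k] [CommSemiring A] [Algebra k A] {s : σ → A[X]}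

lemma natDegree_aeval_monomial_le (hs : ∀ i, (s i).natDegree ≤ 1) (m : σ →₀ ℕ) (a : k) :
    (aeval s (monomial m a)).natDegree ≤ m.degree := by
  rw [aeval_monomial, Polynomial.algebraMap_apply]
  refine (Polynomial.natDegree_C_mul_le _ _).trans ((Polynomial.natDegree_prod_le _ _).trans ?_)
  exact Finset.sum_le_sum fun i _ =>
    (Polynomial.natDegree_pow_le_of_le _ (hs i)).trans_eq (mul_one _)

lemma coeff_degree_aeval_monomial (hs : ∀ i, (s i).natDegree ≤ 1) (m : σ →₀ ℕ) (a : k) :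
    (aeval s (monomial m a)).coeff m.degree = aeval (fun i => (s i).coeff 1) (monomial m a) := by
  have hcoeff := Polynomial.coeff_multiset_prod_of_natDegree_le (t := m.toMultiset.map s) 1
    (by simpa using fun i _ => hs i)
  rw [Multiset.map_map, Multiset.card_map, mul_one, Finsupp.card_toMultiset,
    prod_map_toMultiset, prod_map_toMultiset] at hcoeff
  rw [aeval_monomial, aeval_monomial, Polynomial.algebraMap_apply, Polynomial.coeff_C_mul]
  exact congrArg _ hcoeff

lemma natDegree_aeval_le (hs : ∀ i, (s i).natDegree ≤ 1) (g : MvPolynomial σ k) :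
    (aeval s g).natDegree ≤ g.totalDegree := by
  conv_lhs => rw [g.as_sum, map_sum]
  exact Polynomial.natDegree_sum_le_of_forall_le _ _ fun m hm =>
    (natDegree_aeval_monomial_le hs m _).trans (le_totalDegree hm)

lemma coeff_aeval_totalDegree (hs : ∀ i, (s i).natDegree ≤ 1) (g : MvPolynomial σ k) :
    (aeval s g).coeff g.totalDegree =
      aeval (fun i => (s i).coeff 1) (homogeneousComponent g.totalDegree g) := by
  conv_lhs => rw [g.as_sum, map_sum, ← g.as_sum, Polynomial.finsetSum_coeff]
  rw [homogeneousComponent_apply, map_sum, Finset.sum_filter]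
  refine Finset.sum_congr rfl fun m hm => ?_
  split_ifs with h
  · rw [← h, coeff_degree_aeval_monomial hs]
  · exact Polynomial.coeff_eq_zero_of_natDegree_lt <|
      (natDegree_aeval_monomial_le hs m _).trans_lt ((le_totalDegree hm).lt_of_ne h)

end Degree

lemma homogeneousComponent_totalDegree_ne_zero {σ k : Type*} [CommSemiring k]
    {g : MvPolynomial σ k} (hg : g ≠ 0) : homogeneousComponent g.totalDegree g ≠ 0 := by
  obtain ⟨m, hm, hd⟩ := Finset.exists_mem_eq_sup g.support (support_nonempty.2 hg)
    fun m => m.sum fun _ e => e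
  refine ne_zero_iff.2 ⟨m, ?_⟩
  have hdeg : m.degree = g.totalDegree := hd.symm
  rw [coeff_homogeneousComponent, if_pos hdeg]
  exact mem_support_iff.1 hm

variable {k : Type*} [Field k] {n : ℕ}

/-- Substitution of the point `Fin.cons 0 x + y • v` of `k ^ (n + 1)` into a polynomial in `n + 1`
variables; the result is a polynomial in `y` whose coefficients are polynomials in `x`. -/
def substLines (v : Fin (n + 1) → k) :
    MvPolynomial (Fin (n + 1)) k →ₐ[k] (MvPolynomial (Fin n) k)[X] :=
  aeval fun i => Polynomial.C ((Fin.cons 0 X : Fin (n + 1) → MvPolynomial (Fin n) k) i) +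
    Polynomial.C (C (v i)) * Polynomial.X

lemma eval_map_substLines (v : Fin (n + 1) → k) (g : MvPolynomial (Fin (n + 1)) k)
    (x : Fin n → k) (y : k) :
    ((substLines v g).map (eval x)).eval y = eval (Fin.cons 0 x + y • v) g := by
  have hcomp : ((Polynomial.evalRingHom y).comp (Polynomial.mapRingHom (eval x))).comp
      (substLines v).toRingHom = eval (Fin.cons 0 x + y • v) := by
    refine ringHom_ext (fun a => by simp) fun i => ?_
    rcases Fin.eq_zero_or_eq_succ i with rfl | ⟨i, rfl⟩ <;> simp [substLines, mul_comm y]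
  exact RingHom.congr_fun hcomp g

lemma natDegree_substLines_le (v : Fin (n + 1) → k) (g : MvPolynomial (Fin (n + 1)) k) :
    (substLines v g).natDegree ≤ g.totalDegree :=
  natDegree_aeval_le (fun _ => by compute_degree) g

lemma coeff_substLines_totalDegree (v : Fin (n + 1) → k) (g : MvPolynomial (Fin (n + 1)) k) :
    (substLines v g).coeff g.totalDegree =
      C (eval v (homogeneousComponent g.totalDegree g)) := by
  rw [substLines, coeff_aeval_totalDegree fun _ => by compute_degree]
  simp only [Polynomial.coeff_add, Polynomial.coeff_C_succ, Polynomial.coeff_C_mul,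
    Polynomial.coeff_X_one, zero_add, mul_one]
  exact (comp_aeval_apply v (Algebra.ofId k (MvPolynomial (Fin n) k)) _).symm

lemma exists_monic_eval_eq [Infinite k] {g : MvPolynomial (Fin (n + 1)) k} (hg : g ≠ 0) :
    ∃ c ≠ 0, ∃ v : Fin (n + 1) → k, v 0 ≠ 0 ∧ ∃ G : (MvPolynomial (Fin n) k)[X], G.Monic ∧
      ∀ x y, (G.map (eval x)).eval y = c * eval (Fin.cons 0 x + y • v) g := by
  let top := homogeneousComponent g.totalDegree g
  obtain ⟨v, hv⟩ : ∃ v, eval v (X 0 * top) ≠ 0 := by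
    by_contra! h
    exact mul_ne_zero (X_ne_zero 0) (homogeneousComponent_totalDegree_ne_zero hg)
      (MvPolynomial.funext fun v => by rw [h v, map_zero])
  rw [map_mul, eval_X] at hv
  have htop : eval v top ≠ 0 := right_ne_zero_of_mul hv
  refine ⟨(eval v top)⁻¹, inv_ne_zero htop, v, left_ne_zero_of_mul hv,
    Polynomial.C (C (eval v top)⁻¹) * substLines v g, ?_, fun x y => ?_⟩
  · refine Polynomial.monic_of_natDegree_le_of_coeff_eq_one g.totalDegree
      ((Polynomial.natDegree_C_mul_le _ _).trans (natDegree_substLines_le v g)) ?_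
    rw [Polynomial.coeff_C_mul, coeff_substLines_totalDegree, ← C_mul, inv_mul_cancel₀ htop, C_1]
  · rw [Polynomial.map_mul, Polynomial.eval_mul, eval_map_substLines]
    simp

lemma exists_eval_eq_eval_map {v : Fin (n + 1) → k} (hv : v 0 ≠ 0)
    (P : (MvPolynomial (Fin n) k)[X]) : ∃ p : MvPolynomial (Fin (n + 1)) k,
      ∀ x y, eval (Fin.cons 0 x + y • v) p = (P.map (eval x)).eval y := by
  let Y : MvPolynomial (Fin (n + 1)) k := C (v 0)⁻¹ * X 0
  let s (i : Fin n) : MvPolynomial (Fin (n + 1)) k := X i.succ - C (v i.succ) * Y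
  refine ⟨P.eval₂ (aeval s : MvPolynomial (Fin n) k →ₐ[k] _).toRingHom Y, fun x y => ?_⟩
  have hY : eval (Fin.cons 0 x + y • v) Y = y := by simp [Y]; field_simp
  have hcomp : (eval (Fin.cons 0 x + y • v)).comp
      (aeval s : MvPolynomial (Fin n) k →ₐ[k] _).toRingHom = eval x := by
    refine ringHom_ext (fun a => by simp) fun i => ?_
    simp [s, hY, mul_comm]
  rw [Polynomial.hom_eval₂, hcomp, hY, Polynomial.eval_map]

end LinearNormalization

section ConnectedZeroSets

open MvPolynomial

lemma isCoprime_of_forall_eval_ne_zero {σ k : Type*} [Finite σ] [Field k] [IsAlgClosed k]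
    {P Q : MvPolynomial σ k} (h : ∀ z, eval z P = 0 → eval z Q ≠ 0) : IsCoprime P Q := by
  rw [IsCoprime, ← Ideal.mem_span_pair, ← Ideal.eq_top_iff_one, ← Ideal.radical_eq_top,
    ← vanishingIdeal_zeroLocus_eq_radical (K := k), zeroLocus_span]
  have hempty : {z : σ → k | ∀ p ∈ ({P, Q} : Set _), aeval z p = 0} = ∅ :=
    Set.eq_empty_of_forall_notMem fun z hz =>
      h z (by simpa [aeval_eq_eval] using hz P (by simp))
        (by simpa [aeval_eq_eval] using hz Q (by simp))
  rw [hempty, vanishingIdeal_empty]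

lemma exists_eval_eq_zero_of_totalDegree_pos {σ k : Type*} [Finite σ] [Field k] [IsAlgClosed k]
    {P : MvPolynomial σ k} (h : 0 < P.totalDegree) : ∃ z, eval z P = 0 := by
  by_contra! hP
  have hunit : IsUnit P := isCoprime_self.1 (isCoprime_of_forall_eval_ne_zero fun z _ => hP z)
  exact h.ne' (isUnit_iff_totalDegree_of_isReduced.1 hunit).2

lemma not_isUnit_of_eval_eq_zero {σ k : Type*} [Field k] {P : MvPolynomial σ k} {z : σ → k}
    (h : eval z P = 0) : ¬ IsUnit P := fun hP =>
  (hP.map (eval z)).ne_zero h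

variable {n : ℕ}

lemma exists_factorization_of_isOpen {g : MvPolynomial (Fin (n + 1)) ℂ} (hg : g ≠ 0)
    {u v : Set (Fin (n + 1) → ℂ)} (hu : IsOpen u) (hv : IsOpen v)
    (hcover : {z | eval z g = 0} ⊆ u ∪ v) (hdisj : {z | eval z g = 0} ∩ (u ∩ v) = ∅) :
    ∃ P Q, g = P * Q ∧ (∀ z, eval z P = 0 ↔ eval z g = 0 ∧ z ∈ u) ∧
      ∀ z, eval z Q = 0 ↔ eval z g = 0 ∧ z ∈ v := by
  obtain ⟨c, hc, d, hd, G, hG, hGg⟩ := exists_monic_eval_eq hg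
  let line (p : (Fin n → ℂ) × ℂ) : Fin (n + 1) → ℂ := Fin.cons 0 p.1 + p.2 • d
  have hline : Continuous line := by fun_prop
  have hroot (x : Fin n → ℂ) (y : ℂ) :
      y ∈ (G.map (eval x)).roots ↔ eval (line (x, y)) g = 0 := by
    rw [Polynomial.mem_roots (hG.map _).ne_zero, Polynomial.IsRoot, hGg, mul_eq_zero,
      or_iff_right hc]
  have hsep : SeparatesRoots eval G (line ⁻¹' u) (line ⁻¹' v) :=
    { isOpen_left := hu.preimage hline
      isOpen_right := hv.preimage hline
      mem_or_mem := fun x y hy => hcover ((hroot x y).1 hy)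
      notMem_right := fun x y hy hyu hyv =>
        Set.eq_empty_iff_forall_notMem.1 hdisj _ ⟨(hroot x y).1 hy, hyu, hyv⟩ }
  have hsurj : Function.Surjective line := fun z => by
    refine ⟨(Fin.tail (z - (z 0 / d 0) • d), z 0 / d 0), funext fun i => ?_⟩
    rcases Fin.eq_zero_or_eq_succ i with rfl | ⟨i, rfl⟩ <;> simp [line, Fin.tail, hd]
  have hmem (w : Set (Fin (n + 1) → ℂ)) (x y) :
      y ∈ rootsOver eval G (line ⁻¹' w) x ↔ eval (line (x, y)) g = 0 ∧ line (x, y) ∈ w := by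
    rw [rootsOver, Multiset.mem_filter, hroot, Set.mem_preimage]
  obtain ⟨P, Q, hPQ, hP, hQ⟩ := hsep.exists_eq_mul hG
  obtain ⟨P', hP'⟩ := exists_eval_eq_eval_map hd P
  obtain ⟨Q', hQ'⟩ := exists_eval_eq_eval_map hd Q
  refine ⟨C c⁻¹ * P', Q', MvPolynomial.funext fun z => ?_, fun z => ?_, fun z => ?_⟩ <;>
    obtain ⟨⟨x, y⟩, rfl⟩ := hsurj z
  · rw [map_mul, map_mul, hP', hQ', mul_assoc, ← Polynomial.eval_mul, ← Polynomial.map_mul, ← hPQ,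
      hGg, eval_C, inv_mul_cancel_left₀ hc]
  · rw [map_mul, eval_C, mul_eq_zero, or_iff_right (inv_ne_zero hc), hP', hP, hmem]
  · rw [hQ', hQ, hmem]

theorem exists_coprime_factorization_of_not_isPreconnected {g : MvPolynomial (Fin n) ℂ}
    (h : ¬ IsPreconnected {z | eval z g = 0}) :
    ∃ P Q, g = P * Q ∧ IsCoprime P Q ∧ ¬ IsUnit P ∧ ¬ IsUnit Q := by
  have hg : g ≠ 0 := by
    rintro rfl
    exact h (by simpa using isPreconnected_univ)
  obtain _ | n := n
  · exact absurd (Set.subsingleton_of_subsingleton.isPreconnected) h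
  simp only [IsPreconnected, not_forall, Set.not_nonempty_iff_eq_empty] at h
  obtain ⟨u, v, hu, hv, hcover, ⟨a, ha⟩, ⟨b, hb⟩, hdisj⟩ := h
  obtain ⟨P, Q, hPQ, hP, hQ⟩ := exists_factorization_of_isOpen hg hu hv hcover hdisj
  refine ⟨P, Q, hPQ, isCoprime_of_forall_eval_ne_zero fun z hzP hzQ => ?_,
    not_isUnit_of_eval_eq_zero ((hP a).2 ha), not_isUnit_of_eval_eq_zero ((hQ b).2 hb)⟩
  exact Set.eq_empty_iff_forall_notMem.1 hdisj z
    ⟨((hP z).1 hzP).1, ((hP z).1 hzP).2, ((hQ z).1 hzQ).2⟩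

end ConnectedZeroSets

theorem generic_fiber_connected_general {n : ℕ} (f : MvPolynomial (Fin n) ℂ)
    (hdim : 2 ≤ setDim (NPinf f)) (hnd : NondegAtInfty f) :
    Set.Finite {c : ℂ | ¬ IsConnected {p : Fin n → ℂ | MvPolynomial.eval p f = c}} := by
  have hf : 0 < f.totalDegree := totalDegree_pos_of_two_le_setDim hdim
  obtain ⟨u, d, hd, hle, q, b, hlead, hq, hb⟩ :=
    exists_prime_factor_weightedHomogeneousComponent hdim hnd
  refine (finite_setOf_coprime_factorization hf fun h =>
    mem_adjoin_of_wedge_grad_eq_zero hd hle hlead hq hb).subset fun c hc => ?_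
  have hfiber : {p | MvPolynomial.eval p f = c} =
      {p | MvPolynomial.eval p (f - MvPolynomial.C c) = 0} := by
    simp only [map_sub, MvPolynomial.eval_C, sub_eq_zero]
  rw [Set.mem_ofPred_eq, hfiber] at hc
  have hne : {p | MvPolynomial.eval p (f - MvPolynomial.C c) = 0}.Nonempty :=
    exists_eval_eq_zero_of_totalDegree_pos (by rwa [totalDegree_sub_C])
  exact exists_coprime_factorization_of_not_isPreconnected fun h => hc ⟨hne, h⟩

/-- If `f ∈ ℂ[x,y]` is non-degenerate at infinity and `dim Γ_∞(f) = 2`, then for all but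
finitely many `c ∈ ℂ` the fiber `f⁻¹(c) ⊆ ℂ²` is connected. -/
theorem generic_fiber_connected (f : MvPolynomial (Fin 2) ℂ)
    (hdim : setDim (NPinf f) = 2) (hnd : NondegAtInfty f) :
    Set.Finite {c : ℂ | ¬ IsConnected {p : Fin 2 → ℂ | MvPolynomial.eval p f = c}} :=
  generic_fiber_connected_general f hdim.ge hnd
end
end
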